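/- arXiv:2307.10964 — 4 statements merged into one kernel-verified Lean document; each statement's English description precedes it below -/
import Mathlib

section
/- Let G be a countable group acting on a countable tree T such that every infinite geodesic 𝐯 in T has a finite initial segment whose G-stabilizer is finite. Then every infinite geodesic 𝐯 has a finite initial segment σ with Stab_G(σ) = Stab_G(𝐯). In particular, for any acylindrical action of a countable group on a countable tree, the induced orbit equivalence relation on the Gromov boundary ∂T is Borel hyperfinite. -/
open MeasureTheory Function Filter

/-! ### Countable Borel equivalence relations -/

section CBER

variable {X Y : Type*} [MeasurableSpace X] [MeasurableSpace Y]

/-- A countable Borel equivalence relation on a standard Borel space. -/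
def IsCBER (E : X → X → Prop) : Prop :=
  Equivalence E ∧ MeasurableSet {p : X × X | E p.1 p.2} ∧ ∀ x : X, {y | E x y}.Countable

/-- `B` meets every `E`-class in exactly one point. -/
def IsTransversal (E : X → X → Prop) (B : Set X) : Prop :=
  ∀ x : X, ∃! y : X, y ∈ B ∧ E x y

/-- A CBER is smooth if it admits a Borel transversal. -/
def SmoothRel (E : X → X → Prop) : Prop :=
  ∃ B : Set X, MeasurableSet B ∧ IsTransversal E B

/-- A Borel equivalence relation all of whose classes are finite. -/
def IsFiniteBorelEquivalence (E : X → X → Prop) : Prop :=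
  Equivalence E ∧ MeasurableSet {p : X × X | E p.1 p.2} ∧ ∀ x : X, {y | E x y}.Finite

/-- A CBER is (Borel) hyperfinite if it is the increasing union of a sequence of
Borel equivalence relations with finite classes. -/
def Hyperfinite (E : X → X → Prop) : Prop :=
  ∃ F : ℕ → X → X → Prop,
    (∀ i, IsFiniteBorelEquivalence (F i)) ∧
    (∀ i x y, F i x y → F (i + 1) x y) ∧
    (∀ x y, E x y ↔ ∃ i, F i x y)

/-- Borel reducibility of equivalence relations. -/
def BorelReducible (E : X → X → Prop) (F : Y → Y → Prop) : Prop :=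
  ∃ f : X → Y, Measurable f ∧ ∀ x x' : X, E x x' ↔ F (f x) (f x')

/-- Borel bireducibility of equivalence relations. -/
def BorelBireducible (E : X → X → Prop) (F : Y → Y → Prop) : Prop :=
  BorelReducible E F ∧ BorelReducible F E

/-- The saturation `[A]_E` of a set `A`: the smallest `E`-invariant set containing `A`. -/
def Saturation (E : X → X → Prop) (A : Set X) : Set X :=
  {x : X | ∃ a ∈ A, E x a}

end CBER

/-! ### ℓ¹ machinery, amenability of CBERs -/

section Amen

variable {X : Type*} [MeasurableSpace X]

/-- ℓ¹ distance between two summable functions. -/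
noncomputable def l1dist {A : Type*} (p q : A → ℝ) : ℝ :=
  ∑' a : A, |p a - q a|

/-- `p` is a probability measure concentrated on the `E`-class of `x`
(identified with its density). -/
def IsProbOnClass (E : X → X → Prop) (p : X → ℝ) (x : X) : Prop :=
  (∀ y, 0 ≤ p y) ∧ (∀ y, p y ≠ 0 → E x y) ∧ HasSum p 1

/-- A CBER is Borel amenable if there is a sequence of Borel assignments of probability
measures on the classes which are asymptotically invariant. -/
def BorelAmenable (E : X → X → Prop) : Prop :=
  ∃ p : ℕ → X → X → ℝ,
    (∀ i x, IsProbOnClass E (p i x) x) ∧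
    (∀ i, Measurable fun q : X × X => p i q.1 q.2) ∧
    (∀ x y, E x y → ∀ ε : ℝ, 0 < ε → ∀ᶠ i in atTop, l1dist (p i x) (p i y) < ε)

/-- A CBER is Borel 2-amenable if there is a double sequence of Borel assignments of
probability measures on the classes which are asymptotically invariant in the
iterated-limit sense. -/
def Borel2Amenable (E : X → X → Prop) : Prop :=
  ∃ p : ℕ → ℕ → X → X → ℝ,
    (∀ i j x, IsProbOnClass E (p i j x) x) ∧
    (∀ i j, Measurable fun q : X × X => p i j q.1 q.2) ∧
    (∀ x y, E x y → ∀ ε : ℝ, 0 < ε →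
      ∀ᶠ i in atTop, ∀ᶠ j in atTop, l1dist (p i j x) (p i j y) < ε)

/-- `E` is μ-hyperfinite: hyperfinite off a μ-null set. -/
def MuHyperfinite (E : X → X → Prop) (μ : Measure X) : Prop :=
  ∃ A : Set X, MeasurableSet A ∧ μ Aᶜ = 0 ∧ Hyperfinite (fun a b : A => E a b)

/-- `E` is μ-amenable: Borel amenable off a μ-null set. -/
def MuAmenable (E : X → X → Prop) (μ : Measure X) : Prop :=
  ∃ A : Set X, MeasurableSet A ∧ μ Aᶜ = 0 ∧ BorelAmenable (fun a b : A => E a b)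

/-- `E` is μ-2-amenable: Borel 2-amenable off a μ-null set. -/
def Mu2Amenable (E : X → X → Prop) (μ : Measure X) : Prop :=
  ∃ A : Set X, MeasurableSet A ∧ μ Aᶜ = 0 ∧ Borel2Amenable (fun a b : A => E a b)

/-- `E` is measure-hyperfinite: μ-hyperfinite for every Borel probability measure μ. -/
def MeasureHyperfinite (E : X → X → Prop) : Prop :=
  ∀ μ : Measure X, IsProbabilityMeasure μ → MuHyperfinite E μ

end Amen

/-! ### Reiter functions and uniform coamenability -/

section Reiter

/-- A (finitely or infinitely supported) probability function on a countable set. -/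
def IsProbFun {A : Type*} (p : A → ℝ) : Prop :=
  (∀ a, 0 ≤ p a) ∧ HasSum p 1

/-- The pushforward of `p : Prob(G)` under the orbit map `g ↦ g • x`. -/
noncomputable def pushMeasure {G X : Type*} [Group G] [MulAction G X]
    (p : G → ℝ) (x : X) : X → ℝ :=
  fun y => ∑' g : {g : G // g • x = y}, p g.1

/-- `p` is an `(S, ε)`-Reiter function for the action `G ↷ X`. -/
def IsReiterFun {G : Type*} (X : Type*) [Group G] [MulAction G X]
    (S : Finset G) (ε : ℝ) (p : G → ℝ) : Prop :=
  IsProbFun p ∧ ∀ s ∈ S, ∀ x : X, l1dist (pushMeasure p x) (pushMeasure p (s • x)) < ε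

/-- A subgroup `H ≤ G` is uniformly coamenable if the action `G ↷ G/H` admits
`(S, ε)`-Reiter functions for all finite `S ⊆ G` and all `ε > 0`. -/
def UniformlyCoamenable {G : Type*} [Group G] (H : Subgroup G) : Prop :=
  ∀ (S : Finset G) (ε : ℝ), 0 < ε → ∃ p : G → ℝ, IsReiterFun (G ⧸ H) S ε p

/-- The Reiter criterion for amenability of a countable group `Q`. -/
def ReiterAmenable (Q : Type*) [Group Q] : Prop :=
  ∀ (S : Finset Q) (ε : ℝ), 0 < ε → ∃ q : Q → ℝ, IsProbFun q ∧
    ∀ s ∈ S, l1dist q (fun x => q (s⁻¹ * x)) < ε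

end Reiter

/-! ### Trees, geodesics and the Gromov boundary -/

section Tree

variable {V : Type*} (T : SimpleGraph V)

/-- The space of infinite geodesics in the graph `T`. -/
def Geo : Set (ℕ → V) :=
  {v | Function.Injective v ∧ ∀ n, T.Adj (v n) (v (n + 1))}

/-- The shift map (the action of the generator of the monoid ℕ) on `Geo T`. -/
def geoShift (v : Geo T) : Geo T :=
  ⟨fun n => v.1 (n + 1),
   fun a b h => by have := v.2.1 h; omega,
   fun n => v.2.2 (n + 1)⟩

/-- Tail equivalence: the orbit equivalence relation of the shift action of the
monoid ℕ on `Geo T`, i.e. the equivalence relation generated by `v ∼ m • v`. -/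
def tailRel : Geo T → Geo T → Prop :=
  Relation.EqvGen fun a b => ∃ m : ℕ, b = (geoShift T)^[m] a

def tailSetoid : Setoid (Geo T) :=
  ⟨tailRel T, Relation.EqvGen.is_equivalence _⟩

/-- The Gromov boundary `∂T = Geo(T)/ℕ`. -/
def Bdry : Type _ := Quotient (tailSetoid T)

instance [MeasurableSpace V] : MeasurableSpace (Bdry T) :=
  inferInstanceAs (MeasurableSpace (Quotient (tailSetoid T)))

variable {G : Type*} [Group G] [MulAction G V]

/-- The action `G ↷ V` is by graph automorphisms of `T`. -/
def IsGraphAction (G : Type*) [Group G] [MulAction G V] : Prop :=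
  ∀ (g : G) (v w : V), T.Adj v w ↔ T.Adj (g • v) (g • w)

variable {T}

/-- The coordinatewise action of `G` on `Geo T`. -/
def geoSmul (h : IsGraphAction T G) (g : G) (v : Geo T) : Geo T :=
  ⟨fun n => g • v.1 n, (MulAction.injective g).comp v.2.1,
   fun n => (h g _ _).mp (v.2.2 n)⟩

lemma geoShift_geoSmul (h : IsGraphAction T G) (g : G) (v : Geo T) :
    geoShift T (geoSmul h g v) = geoSmul h g (geoShift T v) := rfl

lemma iterate_geoShift_geoSmul (h : IsGraphAction T G) (g : G) (m : ℕ) (v : Geo T) :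
    (geoShift T)^[m] (geoSmul h g v) = geoSmul h g ((geoShift T)^[m] v) := by
  induction m generalizing v with
  | zero => rfl
  | succ m ih =>
      rw [Function.iterate_succ_apply, Function.iterate_succ_apply,
        geoShift_geoSmul, ih]

lemma tailRel_geoSmul (h : IsGraphAction T G) (g : G) {v w : Geo T}
    (hvw : tailRel T v w) : tailRel T (geoSmul h g v) (geoSmul h g w) := by
  induction hvw with
  | rel a b hab =>
      obtain ⟨m, rfl⟩ := hab
      exact Relation.EqvGen.rel _ _ ⟨m, (iterate_geoShift_geoSmul h g m a).symm⟩
  | refl a => exact Relation.EqvGen.refl _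
  | symm a b _ ih => exact Relation.EqvGen.symm _ _ ih
  | trans a b c _ _ ih1 ih2 => exact Relation.EqvGen.trans _ _ _ ih1 ih2

/-- The induced action of `G` on the Gromov boundary `∂T`. -/
def bdrySmul (h : IsGraphAction T G) (g : G) : Bdry T → Bdry T :=
  Quotient.map (geoSmul h g) (fun _ _ hab => tailRel_geoSmul h g hab)

/-- The orbit equivalence relation `E_G^{∂T}` of the boundary action. -/
def bdryRel (h : IsGraphAction T G) : Bdry T → Bdry T → Prop :=
  fun x y => ∃ g : G, bdrySmul h g x = y

/-- The orbit equivalence relation `E_G^{Geo(T)}`. -/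
def geoRel (h : IsGraphAction T G) : Geo T → Geo T → Prop :=
  fun v w => ∃ g : G, geoSmul h g v = w

end Tree

/-! ### Stabilizers of geodesics and of their initial segments -/

section Stab

variable (G : Type*) {V : Type*} [Group G] [MulAction G V]

/-- The (pointwise) stabilizer of an infinite sequence of vertices. -/
def ptwiseStab (v : ℕ → V) : Subgroup G where
  carrier := {g : G | ∀ k : ℕ, g • v k = v k}
  one_mem' := fun k => one_smul _ _
  mul_mem' := fun {a b} ha hb k => by rw [mul_smul, hb k, ha k]
  inv_mem' := fun {a} ha k => inv_smul_eq_iff.mpr (ha k).symm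

/-- The stabilizer of the initial segment `(v 0, …, v n)`. -/
def initStab (v : ℕ → V) (n : ℕ) : Subgroup G where
  carrier := {g : G | ∀ k ≤ n, g • v k = v k}
  one_mem' := fun k _ => one_smul _ _
  mul_mem' := fun {a b} ha hb k hk => by rw [mul_smul, hb k hk, ha k hk]
  inv_mem' := fun {a} ha k hk => inv_smul_eq_iff.mpr (ha k hk).symm

/-- The stabilizer of a finite geodesic given as a tuple of vertices. -/
def finStab {n : ℕ} (f : Fin n → V) : Subgroup G where
  carrier := {g : G | ∀ i : Fin n, g • f i = f i}
  one_mem' := fun i => one_smul _ _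
  mul_mem' := fun {a b} ha hb i => by rw [mul_smul, hb i, ha i]
  inv_mem' := fun {a} ha i => inv_smul_eq_iff.mpr (ha i).symm

end Stab

/-! ### Orbit equivalence relations of monoid actions -/

section MonoidOrbit

/-- The orbit equivalence relation of a monoid action: the equivalence relation
generated by `x ∼ m • x`. -/
def monOrbitRel (M : Type*) {X : Type*} [Monoid M] [MulAction M X] :
    X → X → Prop :=
  Relation.EqvGen fun x y => ∃ m : M, y = m • x

end MonoidOrbit

/-! ### STATEMENT 10 -/

/-- An action `G ↷ T` on a tree is acylindrical if for every `k` there are `R, N` such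
that for any two vertices at distance at least `R`, at most `N` elements of `G` move
both vertices by at most `k`. -/
def Acylindrical {V : Type*} (T : SimpleGraph V) (G : Type*) [Group G] [MulAction G V] :
    Prop :=
  ∀ k : ℕ, ∃ R N : ℕ, ∀ x y : V, R ≤ T.dist x y →
    {g : G | T.dist x (g • x) ≤ k ∧ T.dist y (g • y) ≤ k}.Finite ∧
    Set.ncard {g : G | T.dist x (g • x) ≤ k ∧ T.dist y (g • y) ≤ k} ≤ N

/-! ### Trees -/

section TreeLemmas

variable {V : Type*} {T : SimpleGraph V}

lemma parent_unique (hT : T.IsTree) (o : V) {u w₁ w₂ : V} (h₁ : T.Adj u w₁) (h₂ : T.Adj u w₂)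
    (d₁ : T.dist o u = T.dist o w₁ + 1) (d₂ : T.dist o u = T.dist o w₂ + 1) : w₁ = w₂ := by
  obtain ⟨p₁, hp₁⟩ := hT.connected.exists_walk_length_eq_dist w₁ o
  obtain ⟨p₂, hp₂⟩ := hT.connected.exists_walk_length_eq_dist w₂ o
  have e₁ : (SimpleGraph.Walk.cons h₁ p₁).IsPath := by
    apply SimpleGraph.Walk.isPath_of_length_eq_dist
    rw [SimpleGraph.Walk.length_cons, hp₁, T.dist_comm, ← d₁, T.dist_comm]
  have e₂ : (SimpleGraph.Walk.cons h₂ p₂).IsPath := by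
    apply SimpleGraph.Walk.isPath_of_length_eq_dist
    rw [SimpleGraph.Walk.length_cons, hp₂, T.dist_comm, ← d₂, T.dist_comm]
  have := (hT.existsUnique_path u o).unique e₁ e₂
  have := congrArg (fun p => SimpleGraph.Walk.snd p) this
  simpa using this

lemma geo_incr (hT : T.IsTree) (o : V) {v : ℕ → V} (hv : v ∈ Geo T) {m : ℕ}
    (h : T.dist o (v m) ≤ T.dist o (v (m + 1))) (k : ℕ) :
    T.dist o (v (m + k + 1)) = T.dist o (v (m + k)) + 1 := by
  induction k with
  | zero =>
    rcases hT.dist_eq_dist_add_one_of_adj o (hv.2 m) with h' | h'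
    · omega
    · exact h'
  | succ k ih =>
    rcases hT.dist_eq_dist_add_one_of_adj o (hv.2 (m + k + 1)) with h' | h'
    · exfalso
      have := parent_unique hT o (hv.2 (m + k)).symm (hv.2 (m + k + 1)) ih h'
      have := hv.1 this
      omega
    · exact h'

lemma geo_incr' (hT : T.IsTree) (o : V) {v : ℕ → V} (hv : v ∈ Geo T) {m : ℕ}
    (h : T.dist o (v m) ≤ T.dist o (v (m + 1))) (k : ℕ) :
    T.dist o (v (m + k)) = T.dist o (v m) + k := by
  induction k with
  | zero => rfl
  | succ k ih => rw [← add_assoc, geo_incr hT o hv h k, ih, add_assoc]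

lemma geo_exists_min (o : V) (v : ℕ → V) :
    ∃ m, ∀ k, T.dist o (v m) ≤ T.dist o (v k) := by
  obtain ⟨m, hm⟩ := exists_minimal_of_wellFoundedLT (P := fun n => n ∈ Set.range fun k => T.dist o (v k))
    ⟨_, 0, rfl⟩
  obtain ⟨⟨m, rfl⟩, h⟩ := hm
  refine ⟨m, fun k => ?_⟩
  rcases le_total (T.dist o (v m)) (T.dist o (v k)) with hle | hle
  · exact hle
  · exact h ⟨k, rfl⟩ hle

open Classical in
/-- The neighbour of `u` that is closer to the root `o`. -/
noncomputable def par (T : SimpleGraph V) (o u : V) : V :=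
  if h : ∃ w, T.Adj u w ∧ T.dist o u = T.dist o w + 1 then h.choose else u

lemma par_eq (hT : T.IsTree) (o : V) {u w : V} (h : T.Adj u w) (d : T.dist o u = T.dist o w + 1) :
    par T o u = w := by
  have hh : ∃ w, T.Adj u w ∧ T.dist o u = T.dist o w + 1 := ⟨w, h, d⟩
  rw [par, dif_pos hh]
  exact parent_unique hT o hh.choose_spec.1 h hh.choose_spec.2 d

/-- The ancestor of `u` at level `i`. -/
noncomputable def anc (T : SimpleGraph V) (o : V) (i : ℕ) (u : V) : V :=
  (par T o)^[T.dist o u - i] u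

lemma anc_const (hT : T.IsTree) (o : V) {v : ℕ → V} (hv : v ∈ Geo T) {m : ℕ}
    (h : T.dist o (v m) ≤ T.dist o (v (m + 1))) (k j : ℕ) :
    anc T o (T.dist o (v m) + k) (v (m + k + j)) = v (m + k) := by
  induction j with
  | zero =>
    simp [anc, geo_incr' hT o hv h]
  | succ j ih =>
    rw [← ih]
    have h1 := geo_incr' hT o hv h (k + j)
    have h2 := geo_incr hT o hv h (k + j)
    rw [← add_assoc] at h1 h2
    unfold anc
    rw [← add_assoc, h2, show T.dist o (v (m + k + j)) + 1 - (T.dist o (v m) + k) =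
      T.dist o (v (m + k + j)) - (T.dist o (v m) + k) + 1 by omega, Function.iterate_succ_apply,
      par_eq hT o (hv.2 _).symm h2]

lemma anc_step (hT : T.IsTree) (o : V) {v : ℕ → V} (hv : v ∈ Geo T) {m : ℕ}
    (h : T.dist o (v m) ≤ T.dist o (v (m + 1))) (i j : ℕ) (hj : i ≤ j) :
    anc T o i (v (m + j)) = anc T o i (v (m + i)) := by
  induction j, hj using Nat.le_induction with
  | base => rfl
  | succ j hj ih =>
    rw [← ih]
    have h1 := geo_incr' hT o hv h j
    have h2 := geo_incr hT o hv h j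
    unfold anc
    rw [← add_assoc, h2, show T.dist o (v (m + j)) + 1 - i = T.dist o (v (m + j)) - i + 1 by omega,
      Function.iterate_succ_apply, par_eq hT o (hv.2 _).symm h2]

lemma endRay_exists (hT : T.IsTree) (o : V) (v : Geo T) (i : ℕ) :
    ∃ a, ∀ᶠ m in atTop, anc T o i (v.1 m) = a := by
  obtain ⟨m, hm⟩ := geo_exists_min (T := T) o v.1
  refine ⟨anc T o i (v.1 (m + i)), eventually_atTop.2 ⟨m + i, fun n hn => ?_⟩⟩
  obtain ⟨j, rfl⟩ := Nat.exists_eq_add_of_le hn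
  rw [add_assoc]
  exact anc_step hT o v.2 (hm _) i (i + j) (by omega)

/-- The ray from the root `o` to the end of `v`. -/
noncomputable def endRay (hT : T.IsTree) (o : V) (v : Geo T) (i : ℕ) : V :=
  (endRay_exists hT o v i).choose

lemma endRay_eq_iff (hT : T.IsTree) (o : V) (v : Geo T) (i : ℕ) (a : V) :
    endRay hT o v i = a ↔ ∀ᶠ m in atTop, anc T o i (v.1 m) = a := by
  have hs := (endRay_exists hT o v i).choose_spec
  constructor
  · rintro rfl
    exact hs
  · intro h
    obtain ⟨m, h1, h2⟩ := (hs.and h).exists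
    exact h1.symm.trans h2

lemma iterate_geoShift_apply (v : Geo T) (m k : ℕ) :
    ((geoShift T)^[m] v).1 k = v.1 (m + k) := by
  induction m generalizing v with
  | zero => simp
  | succ m ih =>
    rw [Function.iterate_succ_apply, ih]
    change v.1 (m + k + 1) = _
    exact congrArg v.1 (by omega)

lemma tailRel_iff (v w : Geo T) :
    tailRel T v w ↔ ∃ m n, ∀ k, v.1 (m + k) = w.1 (n + k) := by
  constructor
  · intro h
    induction h with
    | rel a b hab =>
      obtain ⟨m, rfl⟩ := hab
      exact ⟨m, 0, fun k => by rw [iterate_geoShift_apply, zero_add]⟩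
    | refl a => exact ⟨0, 0, fun _ => rfl⟩
    | symm a b _ ih =>
      obtain ⟨m, n, h⟩ := ih
      exact ⟨n, m, fun k => (h k).symm⟩
    | trans a b c _ _ ih1 ih2 =>
      obtain ⟨m, n, h⟩ := ih1
      obtain ⟨m', n', h'⟩ := ih2
      refine ⟨m + m', n' + n, fun k => ?_⟩
      rw [add_assoc, h, add_assoc, ← h']
      exact congrArg b.1 (by omega)
  · rintro ⟨m, n, h⟩
    have : (geoShift T)^[m] v = (geoShift T)^[n] w := by
      apply Subtype.ext
      funext k
      rw [iterate_geoShift_apply, iterate_geoShift_apply, h]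
    refine Relation.EqvGen.trans _ _ _ (Relation.EqvGen.rel _ _ ⟨m, rfl⟩) ?_
    rw [this]
    exact Relation.EqvGen.symm _ _ (Relation.EqvGen.rel _ _ ⟨n, rfl⟩)

lemma endRay_tail (hT : T.IsTree) (o : V) (v : Geo T) :
    ∃ m n, ∀ k, endRay hT o v (m + k) = v.1 (n + k) := by
  obtain ⟨m, hm⟩ := geo_exists_min (T := T) o v.1
  refine ⟨T.dist o (v.1 m), m, fun k => ?_⟩
  rw [endRay_eq_iff]
  refine eventually_atTop.2 ⟨m + k, fun n hn => ?_⟩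
  obtain ⟨j, rfl⟩ := Nat.exists_eq_add_of_le hn
  exact anc_const hT o v.2 (hm _) k j

lemma endRay_tailRel (hT : T.IsTree) (o : V) {v w : Geo T} (h : tailRel T v w) :
    endRay hT o v = endRay hT o w := by
  obtain ⟨m, n, h⟩ := (tailRel_iff v w).1 h
  funext i
  rw [endRay_eq_iff]
  obtain ⟨N, hN⟩ := eventually_atTop.1 ((endRay_eq_iff hT o w i _).1 rfl)
  refine eventually_atTop.2 ⟨N + m, fun k hk => ?_⟩
  obtain ⟨j, rfl⟩ := Nat.exists_eq_add_of_le hk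
  rw [show N + m + j = m + (N + j) by omega, h]
  exact hN _ (by omega)

lemma measurable_endRay [Countable V] [MeasurableSpace V] [DiscreteMeasurableSpace V]
    (hT : T.IsTree) (o : V) : Measurable (endRay hT o) := by
  refine measurable_pi_lambda _ fun i => measurable_to_countable' fun a => ?_
  have : (fun v => endRay hT o v i) ⁻¹' {a} =
      ⋃ N : ℕ, ⋂ m : ℕ, {v : Geo T | N ≤ m → anc T o i (v.1 m) = a} := by
    ext v
    simp [endRay_eq_iff, eventually_atTop]
  rw [this]
  refine MeasurableSet.iUnion fun N => MeasurableSet.iInter fun m => ?_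
  have hm : Measurable fun v : Geo T => v.1 m := (measurable_pi_apply m).comp measurable_subtype_coe
  exact hm (MeasurableSet.of_discrete (s := {x | N ≤ m → anc T o i x = a}))

end TreeLemmas

section Finiteness

variable {V : Type*} {G : Type*} [Group G] [MulAction G V]

lemma stab_stabilizes (v : ℕ → V) {n : ℕ} (h : ((initStab G v n : Subgroup G) : Set G).Finite) :
    ∃ n : ℕ, initStab G v n = ptwiseStab G v := by
  classical
  have hex : ∀ g : G, ∃ k, (∀ i ≤ k, g • v i = v i) → ∀ i, g • v i = v i := by
    intro g
    by_cases hg : ∀ i, g • v i = v i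
    · exact ⟨0, fun _ => hg⟩
    · push Not at hg
      obtain ⟨i, hi⟩ := hg
      exact ⟨i, fun h' => absurd (h' i le_rfl) hi⟩
  choose K hK using hex
  obtain ⟨M, hM⟩ := (h.image K).bddAbove
  refine ⟨max n M, le_antisymm ?_ ?_⟩
  · intro g hg
    have hg' : ∀ k ≤ max n M, g • v k = v k := hg
    have h1 : g ∈ ((initStab G v n : Subgroup G) : Set G) :=
      fun k hk => hg' k (le_trans hk (le_max_left _ _))
    have h2 : K g ≤ M := hM ⟨g, h1, rfl⟩
    exact hK g fun i hi => hg' i (by omega)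
  · intro g hg k _
    exact hg k

/-- Orbits are closed, given a finite stabilizer of an initial segment. -/
lemma orbit_closed (v u : ℕ → V) {n : ℕ} (h : ((initStab G v n : Subgroup G) : Set G).Finite)
    (hu : ∀ m, ∃ g : G, ∀ i < m, g • v i = u i) : ∃ g : G, ∀ i, g • v i = u i := by
  classical
  obtain ⟨g₀, hg₀⟩ := hu (n + 1)
  by_contra hcon
  push Not at hcon
  choose K hK using hcon
  obtain ⟨M, hM⟩ := (h.image fun s => K (g₀ * s)).bddAbove
  obtain ⟨g, hg⟩ := hu (max n M + 1)
  have h1 : g₀⁻¹ * g ∈ ((initStab G v n : Subgroup G) : Set G) := by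
    intro k hk
    rw [mul_smul, hg k (by omega), ← hg₀ k (by omega), inv_smul_smul]
  have h2 : K (g₀ * (g₀⁻¹ * g)) ≤ M := hM ⟨_, h1, rfl⟩
  rw [mul_inv_cancel_left] at h2
  exact hK g (hg _ (by omega))

/-- Canonical representative of a `G`-orbit on sequences. -/
noncomputable def can (G : Type*) {V : Type*} [Group G] [MulAction G V] (v : ℕ → V) (n : ℕ) : V :=
  @Classical.epsilon V ⟨v 0⟩
    (fun a => ∃ g : G, (∀ i, (h : i < n) → g • v i = can G v i) ∧ g • v n = a)
termination_by n

lemma can_spec (v : ℕ → V) (m : ℕ) : ∃ g : G, ∀ i < m, g • v i = can G v i := by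
  induction m with
  | zero => exact ⟨1, fun i hi => absurd hi (by omega)⟩
  | succ m ih =>
    have : ∃ a, ∃ g : G, (∀ i, (h : i < m) → g • v i = can G v i) ∧ g • v m = a := by
      obtain ⟨g, hg⟩ := ih
      exact ⟨_, g, hg, rfl⟩
    obtain ⟨g, hg, hg'⟩ := @Classical.epsilon_spec_aux V ⟨v 0⟩ _ this
    refine ⟨g, fun i hi => ?_⟩
    rcases Nat.lt_succ_iff_lt_or_eq.1 hi with h | rfl
    · exact hg i h
    · rw [hg', can]

lemma can_congr {v w : ℕ → V} {n : ℕ} {h : G} (hh : ∀ i ≤ n, h • v i = w i) :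
    can G v n = can G w n := by
  induction n using Nat.strong_induction_on with
  | _ n ih =>
    have e : (fun a => ∃ g : G, (∀ i, (_ : i < n) → g • v i = can G v i) ∧ g • v n = a) =
        (fun a => ∃ g : G, (∀ i, (_ : i < n) → g • w i = can G w i) ∧ g • w n = a) := by
      funext a
      apply propext
      constructor
      · rintro ⟨g, h1, h2⟩
        refine ⟨g * h⁻¹, fun i hi => ?_, ?_⟩
        · rw [← hh i hi.le, mul_smul, inv_smul_smul, h1 i hi]
          exact ih i hi fun j hj => hh j (by omega)
        · rw [← hh n le_rfl, mul_smul, inv_smul_smul, h2]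
      · rintro ⟨g, h1, h2⟩
        refine ⟨g * h, fun i hi => ?_, ?_⟩
        · rw [mul_smul, hh i hi.le, h1 i hi]
          exact (ih i hi fun j hj => hh j (by omega)).symm
        · rw [mul_smul, hh n le_rfl, h2]
    rw [can, can, e]

lemma can_eq_of_smul {v w : ℕ → V} {h : G} (hh : ∀ i, h • v i = w i) :
    can G v = can G w := by
  funext n
  exact can_congr fun i _ => hh i

/-- Some initial segment has finite stabilizer. -/
def FinSt (G : Type*) {V : Type*} [Group G] [MulAction G V] (v : ℕ → V) : Prop :=
  ∃ n : ℕ, ((initStab G v n : Subgroup G) : Set G).Finite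

lemma can_mem {v : ℕ → V} (hv : FinSt G v) : ∃ g : G, ∀ i, g • v i = can G v i := by
  obtain ⟨n, hn⟩ := hv
  exact orbit_closed v _ hn (can_spec v)

lemma can_eq_iff {v w : ℕ → V} (hv : FinSt G v) (hw : FinSt G w) :
    can G v = can G w ↔ ∃ g : G, ∀ i, g • v i = w i := by
  constructor
  · intro h
    obtain ⟨g, hg⟩ := can_mem hv
    obtain ⟨g', hg'⟩ := can_mem hw
    refine ⟨g'⁻¹ * g, fun i => ?_⟩
    rw [mul_smul, hg, h, ← hg', inv_smul_smul]
  · rintro ⟨g, hg⟩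
    exact can_eq_of_smul hg

lemma finSt_of_shift {v : ℕ → V} (d : ℕ) (h : FinSt G fun i => v (d + i)) : FinSt G v := by
  obtain ⟨n, hn⟩ := h
  exact ⟨d + n, hn.subset fun g hg k hk => hg (d + k) (by omega)⟩

lemma measurable_of_prefix [Countable V] [MeasurableSpace V] [DiscreteMeasurableSpace V]
    {f : (ℕ → V) → V} (n : ℕ) (hf : ∀ v w : ℕ → V, (∀ i ≤ n, v i = w i) → f v = f w) :
    Measurable f := by
  let e : (Fin (n + 1) → V) → (ℕ → V) := fun w i => w ⟨min i n, by omega⟩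
  have : f = (f ∘ e) ∘ fun v i => v i.1 := by
    funext v
    apply hf
    intro i hi
    simp [e, min_eq_left hi]
  rw [this]
  exact (measurable_of_countable _).comp (by fun_prop)

lemma measurable_can [Countable V] [MeasurableSpace V] [DiscreteMeasurableSpace V] :
    Measurable (can G : (ℕ → V) → ℕ → V) := by
  refine measurable_pi_lambda _ fun n => measurable_of_prefix n fun v w h => ?_
  exact can_congr (h := (1 : G)) fun i hi => by rw [one_smul, h i hi]

end Finiteness

section Refine

open Classical in
/-- Greedily refined sets of positions in the sequence `q`. -/
def posSet {Z : Type*} (t : ℕ → Z → Prop) (q : ℕ → Z) : ℕ → Set ℕ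
  | 0 => Set.univ
  | n + 1 =>
    if {k | k ∈ posSet t q n ∧ t n (q k)}.Infinite then {k | k ∈ posSet t q n ∧ t n (q k)}
    else {k | k ∈ posSet t q n ∧ ¬ t n (q k)}

/-- Positions surviving all refinements. -/
def posInf {Z : Type*} (t : ℕ → Z → Prop) (q : ℕ → Z) : Set ℕ :=
  {k | ∀ n, k ∈ posSet t q n}

open Classical in
/-- Corrected sets of positions. -/
def posFin {Z : Type*} (t : ℕ → Z → Prop) (q : ℕ → Z) (n : ℕ) : Set ℕ :=
  if (posInf t q).Infinite then posInf t q else {k | k ∈ posSet t q n ∧ k ∉ posInf t q}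

variable {Z : Type*} {t : ℕ → Z → Prop}

lemma posSet_infinite (q : ℕ → Z) (n : ℕ) : (posSet t q n).Infinite := by
  induction n with
  | zero => exact Set.infinite_univ
  | succ n ih =>
    rw [posSet]
    split_ifs with h
    · exact h
    · intro h'
      apply ih
      refine ((Set.not_infinite.1 h).union h').subset fun k hk => ?_
      by_cases ht : t n (q k)
      · exact Or.inl ⟨hk, ht⟩
      · exact Or.inr ⟨hk, ht⟩

lemma posSet_succ_subset (q : ℕ → Z) (n : ℕ) : posSet t q (n + 1) ⊆ posSet t q n := by
  intro k hk
  rw [posSet] at hk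
  split_ifs at hk with h
  · exact hk.1
  · exact hk.1

lemma posSet_anti (q : ℕ → Z) : Antitone (posSet t q) :=
  antitone_nat_of_succ_le (posSet_succ_subset q)

lemma posSet_test (q : ℕ → Z) (n : ℕ) {k k' : ℕ} (hk : k ∈ posSet t q (n + 1))
    (hk' : k' ∈ posSet t q (n + 1)) : t n (q k) ↔ t n (q k') := by
  rw [posSet] at hk hk'
  split_ifs at hk hk' with h
  · exact iff_of_true hk.2 hk'.2
  · exact iff_of_false hk.2 hk'.2

lemma infinite_shift {A B : Set ℕ} {a b : ℕ} (h : ∀ k, a + k ∈ A ↔ b + k ∈ B)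
    (hA : A.Infinite) : B.Infinite := by
  rw [Set.infinite_iff_exists_gt] at hA ⊢
  intro M
  obtain ⟨x, hx, hxM⟩ := hA (a + M)
  obtain ⟨j, rfl⟩ := Nat.exists_eq_add_of_le hxM.le
  rw [add_assoc] at hx
  exact ⟨_, (h _).1 hx, by omega⟩

lemma infinite_shift_iff {A B : Set ℕ} {a b : ℕ} (h : ∀ k, a + k ∈ A ↔ b + k ∈ B) :
    A.Infinite ↔ B.Infinite :=
  ⟨infinite_shift h, infinite_shift fun k => (h k).symm⟩

lemma posSet_shift {q q' : ℕ → Z} {a b : ℕ} (h : ∀ k, q (a + k) = q' (b + k)) (n k : ℕ) :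
    a + k ∈ posSet t q n ↔ b + k ∈ posSet t q' n := by
  induction n generalizing k with
  | zero => simp [posSet]
  | succ n ih =>
    have e : {k | k ∈ posSet t q n ∧ t n (q k)}.Infinite ↔
        {k | k ∈ posSet t q' n ∧ t n (q' k)}.Infinite := by
      apply infinite_shift_iff (a := a) (b := b)
      intro k
      simp only [Set.mem_ofPred_eq, h, ih]
    rw [posSet, posSet]
    by_cases h' : {k | k ∈ posSet t q n ∧ t n (q k)}.Infinite
    · rw [if_pos h', if_pos (e.1 h')]
      simp only [Set.mem_ofPred_eq, h, ih]
    · rw [if_neg h', if_neg (fun h'' => h' (e.2 h''))]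
      simp only [Set.mem_ofPred_eq, h, ih]

lemma posInf_shift {q q' : ℕ → Z} {a b : ℕ} (h : ∀ k, q (a + k) = q' (b + k)) (k : ℕ) :
    a + k ∈ posInf t q ↔ b + k ∈ posInf t q' :=
  forall_congr' fun n => posSet_shift h n k

lemma posFin_shift {q q' : ℕ → Z} {a b : ℕ} (h : ∀ k, q (a + k) = q' (b + k)) (n k : ℕ) :
    a + k ∈ posFin t q n ↔ b + k ∈ posFin t q' n := by
  have e := infinite_shift_iff (posInf_shift (t := t) h)
  unfold posFin
  by_cases h' : (posInf t q).Infinite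
  · rw [if_pos h', if_pos (e.1 h')]
    exact posInf_shift h k
  · rw [if_neg h', if_neg (fun h'' => h' (e.2 h''))]
    simp only [Set.mem_ofPred_eq, posInf_shift h, posSet_shift h]

lemma posFin_nonempty (q : ℕ → Z) (n : ℕ) : ∃ k, k ∈ posFin t q n := by
  unfold posFin
  split_ifs with h
  · exact h.nonempty
  · by_contra hcon
    push Not at hcon
    refine posSet_infinite (t := t) q n ((Set.not_infinite.1 h).subset fun k hk => ?_)
    by_contra hk'
    exact hcon k ⟨hk, hk'⟩

lemma posFin_anti (q : ℕ → Z) : Antitone (posFin t q) := by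
  intro m n hmn k hk
  unfold posFin at *
  split_ifs at * with h
  · exact hk
  · exact ⟨posSet_anti q hmn hk.1, hk.2⟩

open Classical in
/-- First corrected position. -/
noncomputable def pos (t : ℕ → Z → Prop) (q : ℕ → Z) (n : ℕ) : ℕ :=
  Nat.find (posFin_nonempty (t := t) q n)

lemma pos_mem (q : ℕ → Z) (n : ℕ) : pos t q n ∈ posFin t q n := by
  classical
  exact Nat.find_spec (posFin_nonempty (t := t) q n)

lemma pos_le {q : ℕ → Z} {n k : ℕ} (h : k ∈ posFin t q n) : pos t q n ≤ k := by
  classical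
  exact Nat.find_min' (posFin_nonempty (t := t) q n) h

lemma pos_mono (q : ℕ → Z) : Monotone (pos t q) :=
  fun _ _ h => pos_le (posFin_anti q h (pos_mem q _))

/-- If the positions are beyond the common tail, they match. -/
lemma pos_match {q q' : ℕ → Z} {a b : ℕ} (h : ∀ k, q (a + k) = q' (b + k)) {n : ℕ}
    (ha : a ≤ pos t q n) (hb : b ≤ pos t q' n) : q (pos t q n) = q' (pos t q' n) := by
  obtain ⟨i, hi⟩ := Nat.exists_eq_add_of_le ha
  obtain ⟨j, hj⟩ := Nat.exists_eq_add_of_le hb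
  have h1 := pos_mem (t := t) q n
  have h2 := pos_mem (t := t) q' n
  rw [hi, posFin_shift h] at h1
  rw [hj, ← posFin_shift h] at h2
  have h3 := pos_le h1
  have h4 := pos_le h2
  have : i = j := by omega
  rw [hi, hj, h, this]

lemma pos_succ {q q' : ℕ → Z} {n : ℕ}
    (h : ∀ k, q (pos t q n + k) = q' (pos t q' n + k)) :
    q (pos t q (n + 1)) = q' (pos t q' (n + 1)) :=
  pos_match h (pos_mono q n.le_succ) (pos_mono q' n.le_succ)

lemma pos_unbounded {q : ℕ → Z} (hfin : ¬ (posInf t q).Infinite) (M : ℕ) :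
    ∃ n, M ≤ pos t q n := by
  have : ∀ k, ∃ n, k ∉ posFin t q n := by
    intro k
    by_contra hcon
    push Not at hcon
    have h0 := hcon 0
    rw [posFin, if_neg hfin] at h0
    apply h0.2
    intro n
    have hn := hcon n
    rw [posFin, if_neg hfin] at hn
    exact hn.1
  choose f hf using this
  refine ⟨(Finset.range M).sup f, ?_⟩
  by_contra hlt
  push Not at hlt
  have h1 : f (pos t q ((Finset.range M).sup f)) ≤ (Finset.range M).sup f :=
    Finset.le_sup (Finset.mem_range.2 hlt)
  exact hf _ (posFin_anti q h1 (pos_mem q _))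

lemma pos_exhaust (hsep : ∀ z z' : Z, (∀ n, t n z ↔ t n z') → z = z')
    {q q' : ℕ → Z} {a b : ℕ} (h : ∀ k, q (a + k) = q' (b + k)) :
    ∃ n, q (pos t q n) = q' (pos t q' n) := by
  have e := infinite_shift_iff (posInf_shift (t := t) h)
  by_cases h' : (posInf t q).Infinite
  · have h1 := pos_mem (t := t) q 0
    have h2 := pos_mem (t := t) q' 0
    rw [posFin, if_pos h'] at h1
    rw [posFin, if_pos (e.1 h')] at h2
    obtain ⟨x, hx, hxa⟩ := Set.infinite_iff_exists_gt.1 h' a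
    obtain ⟨j, rfl⟩ := Nat.exists_eq_add_of_le hxa.le
    refine ⟨0, hsep _ _ fun n => ?_⟩
    rw [posSet_test q n (h1 (n + 1)) (hx (n + 1)), h]
    exact posSet_test q' n ((posInf_shift h j).1 hx (n + 1)) (h2 (n + 1))
  · obtain ⟨n, hn⟩ := pos_unbounded h' a
    obtain ⟨m, hm⟩ := pos_unbounded (fun h'' => h' (e.2 h'')) b
    exact ⟨max n m, pos_match h (hn.trans (pos_mono q (le_max_left _ _)))
      (hm.trans (pos_mono q' (le_max_right _ _)))⟩

lemma measurableSet_infinite {X : Type*} [MeasurableSpace X] {A : X → Set ℕ}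
    (hA : ∀ k, MeasurableSet {x | k ∈ A x}) : MeasurableSet {x | (A x).Infinite} := by
  have : {x | (A x).Infinite} = ⋂ M : ℕ, ⋃ k : ℕ, {x | k ∈ A x ∧ M < k} := by
    ext x
    simp [Set.infinite_iff_exists_gt]
  rw [this]
  exact MeasurableSet.iInter fun M => MeasurableSet.iUnion fun k => (hA k).inter (.const _)

lemma measurableSet_posSet {X : Type*} [MeasurableSpace X] {q : X → ℕ → Z}
    (hq : ∀ n k, MeasurableSet {x | t n (q x k)}) (n k : ℕ) :
    MeasurableSet {x | k ∈ posSet t (q x) n} := by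
  induction n generalizing k with
  | zero => simp [posSet]
  | succ n ih =>
    have hI := measurableSet_infinite (A := fun x => {k | k ∈ posSet t (q x) n ∧ t n (q x k)})
      (fun k => (ih k).inter (hq n k))
    have : {x | k ∈ posSet t (q x) (n + 1)} =
        ({x | {k | k ∈ posSet t (q x) n ∧ t n (q x k)}.Infinite} ∩
          ({x | k ∈ posSet t (q x) n} ∩ {x | t n (q x k)})) ∪
        ({x | {k | k ∈ posSet t (q x) n ∧ t n (q x k)}.Infinite}ᶜ ∩
          ({x | k ∈ posSet t (q x) n} ∩ {x | t n (q x k)}ᶜ)) := by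
      ext x
      simp only [Set.mem_ofPred_eq, posSet, Set.mem_union, Set.mem_inter_iff, Set.mem_compl_iff]
      split_ifs with h <;> simp [h]
    rw [this]
    exact (hI.inter ((ih k).inter (hq n k))).union (hI.compl.inter ((ih k).inter (hq n k).compl))

lemma measurableSet_posFin {X : Type*} [MeasurableSpace X] {q : X → ℕ → Z}
    (hq : ∀ n k, MeasurableSet {x | t n (q x k)}) (n k : ℕ) :
    MeasurableSet {x | k ∈ posFin t (q x) n} := by
  have hJ : ∀ k, MeasurableSet {x | k ∈ posInf t (q x)} := by
    intro k
    have : {x | k ∈ posInf t (q x)} = ⋂ n, {x | k ∈ posSet t (q x) n} := by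
      ext x
      simp [posInf]
    rw [this]
    exact MeasurableSet.iInter fun n => measurableSet_posSet hq n k
  have hI := measurableSet_infinite hJ
  have : {x | k ∈ posFin t (q x) n} =
      ({x | (posInf t (q x)).Infinite} ∩ {x | k ∈ posInf t (q x)}) ∪
      ({x | (posInf t (q x)).Infinite}ᶜ ∩
        ({x | k ∈ posSet t (q x) n} ∩ {x | k ∈ posInf t (q x)}ᶜ)) := by
    ext x
    simp only [Set.mem_ofPred_eq, posFin, Set.mem_union, Set.mem_inter_iff, Set.mem_compl_iff]
    split_ifs with h <;> simp [h]
  rw [this]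
  exact (hI.inter (hJ k)).union (hI.compl.inter ((measurableSet_posSet hq n k).inter (hJ k).compl))

lemma measurable_pos {X : Type*} [MeasurableSpace X] {q : X → ℕ → Z}
    (hq : ∀ n k, MeasurableSet {x | t n (q x k)}) (n : ℕ) :
    Measurable fun x => pos t (q x) n := by
  classical
  have := measurable_find (p := fun x k => k ∈ posFin t (q x) n)
    (fun x => posFin_nonempty (t := t) (q x) n) (fun k => measurableSet_posFin hq n k)
  convert this using 2
  unfold pos
  congr

end Refine

section HF

lemma measurableSet_eq_seq {V : Type*} [Countable V] [MeasurableSpace V]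
    [DiscreteMeasurableSpace V] {X : Type*} [MeasurableSpace X] {f g : X → ℕ → V}
    (hf : Measurable f) (hg : Measurable g) : MeasurableSet {x | f x = g x} := by
  have : {x | f x = g x} = ⋂ i, ⋃ a, {x | f x i = a} ∩ {x | g x i = a} := by
    ext x
    simp [funext_iff, eq_comm]
  rw [this]
  have hf' : ∀ i, Measurable fun x => f x i := fun i => (measurable_pi_apply i).comp hf
  have hg' : ∀ i, Measurable fun x => g x i := fun i => (measurable_pi_apply i).comp hg
  exact MeasurableSet.iInter fun i => MeasurableSet.iUnion fun a =>
    (hf' i (MeasurableSet.of_discrete (s := {a}))).inter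
      (hg' i (MeasurableSet.of_discrete (s := {a})))

/-- An increasing union of smooth relations with explicit countable labels is hyperfinite. -/
lemma hyperfinite_of_tower {X V : Type*} [MeasurableSpace X] [Countable V] [MeasurableSpace V]
    [DiscreteMeasurableSpace V] (r : ℕ → X → ℕ → V) (hr : ∀ n, Measurable (r n))
    (hinj : ∀ x y, r 0 x = r 0 y → x = y)
    (hstep : ∀ n x y, r n x = r n y → r (n + 1) x = r (n + 1) y)
    {J : Type*} [Countable J] [Nonempty J] (H : J → (ℕ → V) → ℕ → V) (hH : ∀ j, Measurable (H j))
    (hlab : ∀ n x, ∃ j, H j (r (n + 1) x) = r n x)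
    (E : X → X → Prop) (hE : ∀ x y, E x y ↔ ∃ n, r n x = r n y) : Hyperfinite E := by
  classical
  obtain ⟨e, he⟩ := exists_surjective_nat J
  have hlab' : ∀ n x, ∃ j, H (e j) (r (n + 1) x) = r n x := by
    intro n x
    obtain ⟨j, hj⟩ := hlab n x
    obtain ⟨i, rfl⟩ := he j
    exact ⟨i, hj⟩
  let l : ℕ → X → ℕ := fun n x => Nat.find (hlab' n x)
  have hl : ∀ n, Measurable (l n) := fun n => measurable_find (hlab' n) fun k =>
    measurableSet_eq_seq ((hH _).comp (hr _)) (hr n)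
  have hlspec : ∀ n x, H (e (l n x)) (r (n + 1) x) = r n x := fun n x => Nat.find_spec (hlab' n x)
  have hlinv : ∀ n x y, r n x = r n y → l n x = l n y := by
    intro n x y h
    have h' := hstep n x y h
    simp only [l, h, h']
  have hup : ∀ n m x y, n ≤ m → r n x = r n y → r m x = r m y := by
    intro n m x y hnm h
    induction m, hnm using Nat.le_induction with
    | base => exact h
    | succ m _ ih => exact hstep m x y ih
  let F : ℕ → X → X → Prop := fun k x y =>
    ∃ n ≤ k, r n x = r n y ∧ ∀ i < n, l i x ≤ k ∧ l i y ≤ k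
  have hdet : ∀ n x y, r n x = r n y → (∀ i < n, l i x = l i y) → x = y := by
    intro n
    induction n with
    | zero => exact fun x y h _ => hinj x y h
    | succ n ih =>
      intro x y h h'
      refine ih x y ?_ fun i hi => h' i (by omega)
      rw [← hlspec, ← hlspec n y, h, h' n (by omega)]
  refine ⟨F, fun k => ⟨⟨?_, ?_, ?_⟩, ?_, ?_⟩, ?_, ?_⟩
  · exact fun x => ⟨0, by omega, rfl, fun i hi => absurd hi (by omega)⟩
  · rintro x y ⟨n, hn, h, h'⟩
    exact ⟨n, hn, h.symm, fun i hi => (h' i hi).symm⟩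
  · rintro x y z ⟨n, hn, h, h'⟩ ⟨m, hm, g, g'⟩
    refine ⟨max n m, by omega, (hup n _ x y (by omega) h).trans (hup m _ y z (by omega) g),
      fun i hi => ⟨?_, ?_⟩⟩
    · by_cases hi' : i < n
      · exact (h' i hi').1
      · rw [hlinv i x y (hup n i x y (by omega) h)]
        exact (g' i (by omega)).1
    · by_cases hi' : i < m
      · exact (g' i hi').2
      · rw [← hlinv i y z (hup m i y z (by omega) g)]
        exact (h' i (by omega)).2
  · have : {p : X × X | F k p.1 p.2} = ⋃ n : ℕ, ({p : X × X | n ≤ k} ∩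
        ({p : X × X | r n p.1 = r n p.2} ∩
          ⋂ i : ℕ, {p : X × X | i < n → l i p.1 ≤ k ∧ l i p.2 ≤ k})) := by
      ext p
      simp [F]
    rw [this]
    refine MeasurableSet.iUnion fun n => (MeasurableSet.const _).inter
      ((measurableSet_eq_seq ((hr n).comp measurable_fst) ((hr n).comp measurable_snd)).inter
        (MeasurableSet.iInter fun i => ?_))
    have hm : Measurable fun p : X × X => (l i p.1, l i p.2) :=
      ((hl i).comp measurable_fst).prodMk ((hl i).comp measurable_snd)
    exact hm (MeasurableSet.of_discrete (s := {a : ℕ × ℕ | i < n → a.1 ≤ k ∧ a.2 ≤ k}))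
  · intro x
    have : {y | F k x y} ⊆ ⋃ n ∈ Set.Iic k, {y | r n x = r n y ∧ ∀ i < n, l i y ≤ k} := by
      rintro y ⟨n, hn, h, h'⟩
      simp only [Set.mem_iUnion]
      exact ⟨n, hn, h, fun i hi => (h' i hi).2⟩
    refine ((Set.finite_Iic k).biUnion fun n _ => ?_).subset this
    refine Set.Finite.of_finite_image (f := fun y => fun i : Fin n => l i y) ?_ ?_
    · refine (Set.finite_Iic (fun _ : Fin n => k)).subset ?_
      rintro _ ⟨y, hy, rfl⟩ i
      exact hy.2 i i.2
    · intro y hy y' hy' hyy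
      exact hdet n y y' (hy.1.symm.trans hy'.1) fun i hi => congrFun hyy ⟨i, hi⟩
  · rintro k x y ⟨n, hn, h, h'⟩
    exact ⟨n, by omega, h, fun i hi => ⟨(h' i hi).1.trans (by omega), (h' i hi).2.trans (by omega)⟩⟩
  · intro x y
    rw [hE]
    constructor
    · rintro ⟨n, h⟩
      refine ⟨n + (Finset.range n).sup (fun i => l i x) + (Finset.range n).sup (fun i => l i y),
        n, by omega, h, fun i hi => ?_⟩
      have h1 := Finset.le_sup (f := fun i => l i x) (Finset.mem_range.2 hi)
      have h2 := Finset.le_sup (f := fun i => l i y) (Finset.mem_range.2 hi)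
      constructor <;> omega
    · rintro ⟨k, n, _, h, _⟩
      exact ⟨n, h⟩

end HF

section Final

variable {V : Type*} {G : Type*} [Group G] [MulAction G V]

/-- Canonical representatives of the tails of `z`. -/
noncomputable def tailCan (G : Type*) {V : Type*} [Group G] [MulAction G V]
    (z : ℕ → V) (k : ℕ) : ℕ → V :=
  can G fun i => z (k + i)

lemma tailCan_det {z z' : ℕ → V} (hz : ∀ k, FinSt G fun i => z (k + i))
    (hz' : ∀ k, FinSt G fun i => z' (k + i)) {a b : ℕ} (h : tailCan G z a = tailCan G z' b)
    (k : ℕ) : tailCan G z (a + k) = tailCan G z' (b + k) := by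
  obtain ⟨g, hg⟩ := (can_eq_iff (hz a) (hz' b)).1 h
  refine (can_eq_iff (hz _) (hz' _)).2 ⟨g, fun i => ?_⟩
  rw [add_assoc, add_assoc]
  exact hg _

lemma measurable_tailCan [Countable V] [MeasurableSpace V] [DiscreteMeasurableSpace V] (k : ℕ) :
    Measurable fun z : ℕ → V => tailCan G z k := by
  unfold tailCan
  exact measurable_can.comp (by fun_prop)

/-- Prepend a finite word after translating by a group element. -/
def branch (j : (Σ d : ℕ, Fin d → V) × G) (z : ℕ → V) (i : ℕ) : V :=
  if h : i < j.1.1 then j.1.2 ⟨i, h⟩ else j.2 • z (i - j.1.1)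

lemma measurable_branch [Countable V] [MeasurableSpace V] [DiscreteMeasurableSpace V]
    (j : (Σ d : ℕ, Fin d → V) × G) : Measurable (branch j) := by
  refine measurable_pi_lambda _ fun i => measurable_of_prefix i fun v w h => ?_
  unfold branch
  split_ifs
  · rfl
  · rw [h _ (by omega)]

lemma exists_branch {z z' : ℕ → V} (d : ℕ) (g : G) (h : ∀ i, z (d + i) = g • z' i) :
    ∃ j : (Σ d : ℕ, Fin d → V) × G, branch j z' = z := by
  refine ⟨(⟨d, fun i => z i⟩, g), ?_⟩
  funext i
  unfold branch
  split_ifs with hi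
  · rfl
  · rw [← h]
    simp only at hi ⊢
    congr 1
    omega

theorem hyperfinite_bdry [Countable V] [MeasurableSpace V] [DiscreteMeasurableSpace V]
    (T : SimpleGraph V) (hT : T.IsTree) [Countable G] (hact : IsGraphAction T G)
    (hfin : ∀ v : Geo T, FinSt G v.1) : Hyperfinite (bdryRel hact) := by
  obtain ⟨o⟩ := hT.connected.nonempty
  haveI : Nonempty V := ⟨o⟩
  let φ : Bdry T → ℕ → V := Quotient.lift (endRay hT o) fun v w h => endRay_tailRel hT o h
  have hφ : Measurable φ := measurable_from_quotient.2 (measurable_endRay hT o)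
  have hφtail : ∀ v : Geo T, ∃ m n, ∀ k, φ (Quotient.mk _ v) (m + k) = v.1 (n + k) :=
    fun v => endRay_tail hT o v
  have hFS : ∀ x k, FinSt G fun i => φ x (k + i) := by
    intro x k
    induction x using Quotient.inductionOn with
    | _ v =>
    obtain ⟨m, n, h⟩ := hφtail v
    apply finSt_of_shift m
    have : (fun i => φ (Quotient.mk _ v) (k + (m + i))) = ((geoShift T)^[n + k] v).1 := by
      funext i
      rw [iterate_geoShift_apply, show k + (m + i) = m + (k + i) by omega, h, add_assoc]
    rw [this]
    exact hfin _
  have hφinj : ∀ x y, φ x = φ y → x = y := by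
    intro x y hxy
    induction x using Quotient.inductionOn with
    | _ v =>
    induction y using Quotient.inductionOn with
    | _ w =>
    obtain ⟨m, n, h⟩ := hφtail v
    obtain ⟨m', n', h'⟩ := hφtail w
    refine Quotient.sound ((tailRel_iff v w).2 ⟨n + m', n' + m, fun k => ?_⟩)
    rw [add_assoc, ← h, hxy, add_assoc, ← h']
    exact congrArg _ (by omega)
  have hrel : ∀ x y, bdryRel hact x y ↔ ∃ a b, tailCan G (φ x) a = tailCan G (φ y) b := by
    intro x y
    have h0 : (∃ a b, tailCan G (φ x) a = tailCan G (φ y) b) ↔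
        ∃ a b, ∃ g : G, ∀ i, g • φ x (a + i) = φ y (b + i) :=
      exists_congr fun a => exists_congr fun b => can_eq_iff (hFS x a) (hFS y b)
    rw [h0]
    induction x using Quotient.inductionOn with
    | _ v =>
    induction y using Quotient.inductionOn with
    | _ w =>
    obtain ⟨m, n, h⟩ := hφtail v
    obtain ⟨m', n', h'⟩ := hφtail w
    constructor
    · rintro ⟨g, hg⟩
      have hg' : tailRel T (geoSmul hact g v) w := Quotient.exact hg
      obtain ⟨a, b, hab⟩ := (tailRel_iff _ _).1 hg'
      refine ⟨m + a + n', m' + b + n, g, fun i => ?_⟩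
      have := hab (n + n' + i)
      change g • v.1 _ = _ at this
      rw [show m + a + n' + i = m + (a + n' + i) by omega, h,
        show m' + b + n + i = m' + (b + n + i) by omega, h',
        show n + (a + n' + i) = a + (n + n' + i) by omega, this]
      exact congrArg _ (by omega)
    · rintro ⟨a, b, g, hg⟩
      refine ⟨g, Quotient.sound ((tailRel_iff _ _).2 ⟨n + a + m', n' + b + m, fun k => ?_⟩)⟩
      change g • v.1 _ = _
      have := hg (m + m' + k)
      rw [show n + a + m' + k = n + (a + m' + k) by omega, ← h,
        show n' + b + m + k = n' + (b + m + k) by omega, ← h',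
        show m + (a + m' + k) = a + (m + m' + k) by omega, this]
      exact congrArg _ (by omega)
  obtain ⟨e, he⟩ := exists_surjective_nat (ℕ × V)
  let t : ℕ → (ℕ → V) → Prop := fun n z => z (e n).1 = (e n).2
  have hsep : ∀ z z' : ℕ → V, (∀ n, t n z ↔ t n z') → z = z' := by
    intro z z' h
    funext i
    obtain ⟨n, hn⟩ := he (i, z i)
    have := (h n).1
    simp only [t, hn] at this
    exact (this trivial).symm
  have hq : ∀ n k, MeasurableSet {x | t n (tailCan G (φ x) k)} := by
    intro n k
    have : Measurable fun x => tailCan G (φ x) k (e n).1 :=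
      (measurable_pi_apply _).comp ((measurable_tailCan k).comp hφ)
    exact this (MeasurableSet.of_discrete (s := {(e n).2}))
  let r : ℕ → Bdry T → ℕ → V := fun n x => match n with
    | 0 => φ x
    | n + 1 => tailCan G (φ x) (pos t (tailCan G (φ x)) n)
  refine hyperfinite_of_tower r ?_ hφinj ?_ (branch (V := V) (G := G)) measurable_branch ?_ _ ?_
  · rintro (_ | n)
    · exact hφ
    · refine measurable_pi_lambda _ fun i => measurable_to_countable' fun a => ?_
      have : (fun x => r (n + 1) x i) ⁻¹' {a} = ⋃ k, ({x | pos t (tailCan G (φ x)) n = k} ∩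
          {x | tailCan G (φ x) k i = a}) := by
        ext x
        simp [r]
      rw [this]
      refine MeasurableSet.iUnion fun k => ?_
      have h1 : Measurable fun x => tailCan G (φ x) k i :=
        (measurable_pi_apply _).comp ((measurable_tailCan k).comp hφ)
      exact (measurable_pos hq n (MeasurableSet.of_discrete (s := {k}))).inter
        (h1 (MeasurableSet.of_discrete (s := {a})))
  · rintro (_ | n) x y h
    · rw [hφinj x y h]
    · exact pos_succ fun k => tailCan_det (hFS x) (hFS y) h k
  · rintro (_ | n) x
    · obtain ⟨g, hg⟩ := can_mem (hFS x (pos t (tailCan G (φ x)) 0))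
      refine exists_branch (pos t (tailCan G (φ x)) 0) g⁻¹ fun i => ?_
      change φ x _ = g⁻¹ • can G _ i
      rw [← hg, inv_smul_smul]
    · obtain ⟨d, hd⟩ := Nat.exists_eq_add_of_le (pos_mono (t := t) (tailCan G (φ x)) n.le_succ)
      obtain ⟨g, hg⟩ := can_mem (hFS x (pos t (tailCan G (φ x)) n))
      obtain ⟨g', hg'⟩ := can_mem (hFS x (pos t (tailCan G (φ x)) (n + 1)))
      refine exists_branch d (g * g'⁻¹) fun i => ?_
      change can G _ _ = (g * g'⁻¹) • can G _ i
      rw [← hg, ← hg', mul_smul, inv_smul_smul, ← add_assoc, ← hd]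
  · intro x y
    rw [hrel]
    constructor
    · rintro ⟨a, b, h⟩
      obtain ⟨n, hn⟩ := pos_exhaust hsep (tailCan_det (hFS x) (hFS y) h)
      exact ⟨n + 1, hn⟩
    · rintro ⟨_ | n, h⟩
      · refine ⟨0, 0, ?_⟩
        change φ x = φ y at h
        rw [h]
      · exact ⟨_, _, h⟩

lemma finSt_of_acylindrical (T : SimpleGraph V) (hT : T.IsTree) (h : Acylindrical T G)
    (v : Geo T) : FinSt G v.1 := by
  obtain ⟨R, N, hR⟩ := h 0
  refine ⟨R, (hR (v.1 0) (v.1 R) ?_).1.subset ?_⟩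
  · have := geo_incr' hT (v.1 0) v.2 (m := 0) (by simp) R
    rw [zero_add] at this
    omega
  · intro g hg
    have hg' : ∀ k ≤ R, g • v.1 k = v.1 k := hg
    simp [hg' 0 (by omega), hg' R le_rfl]

end Final

theorem stabilized_segments_of_finite_segment_stabilizers
    {V : Type*} [Countable V] [MeasurableSpace V] [DiscreteMeasurableSpace V]
    (T : SimpleGraph V) (hT : T.IsTree)
    {G : Type*} [Group G] [Countable G] [MulAction G V]
    (hact : IsGraphAction T G) :
    ((∀ v : Geo T, ∃ n : ℕ, ((initStab G v.1 n : Subgroup G) : Set G).Finite) →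
      ∀ v : Geo T, ∃ n : ℕ, initStab G v.1 n = ptwiseStab G v.1) ∧
    (Acylindrical T G → Hyperfinite (bdryRel hact)) := by
  exact ⟨fun h v => stab_stabilizes v.1 (h v).choose_spec,
    fun h => hyperfinite_bdry T hT hact (finSt_of_acylindrical T hT h)⟩
end

section
/- Let G be a countable group acting on a countable tree T and let σ be a finite geodesic in T. Then the set Geo_σ(T) of infinite geodesics 𝐯 extending σ with Stab_G(𝐯) = Stab_G(σ) is a closed subset of Geo(T), the restriction of E_G^{Geo(T)} to Geo_σ(T) equals the orbit equivalence relation of the action Stab_G(σ) ↷ Geo_σ(T), this action is trivial, and hence the restriction E_G^{Geo(T)} ↾ Geo_σ(T) is smooth. -/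
open MeasureTheory Function Filter

/-! ### STATEMENT 12 -/

/-- `Geo_σ(T)`: the infinite geodesics extending the finite geodesic `σ = f` whose
stabilizer equals the stabilizer of `σ`. -/
def GeoSeg (G : Type*) {V : Type*} [Group G] [MulAction G V] (T : SimpleGraph V)
    {n : ℕ} (f : Fin (n + 1) → V) : Set (Geo T) :=
  {v : Geo T | (∀ i : Fin (n + 1), v.1 i.1 = f i) ∧ ptwiseStab G v.1 = finStab G f}

theorem geoSeg_closed_and_smooth
    {V : Type*} [Countable V] [MeasurableSpace V] [DiscreteMeasurableSpace V]
    [TopologicalSpace V] [DiscreteTopology V]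
    (T : SimpleGraph V) (hT : T.IsTree)
    {G : Type*} [Group G] [Countable G] [MulAction G V]
    (hact : IsGraphAction T G)
    (n : ℕ) (f : Fin (n + 1) → V) (hinj : Function.Injective f)
    (hadj : ∀ i : Fin n, T.Adj (f i.castSucc) (f i.succ)) :
    IsClosed (GeoSeg G T f) ∧
    (∀ v ∈ GeoSeg G T f, ∀ w ∈ GeoSeg G T f,
      (geoRel hact v w ↔ ∃ g ∈ finStab G f, geoSmul hact g v = w)) ∧
    (∀ v ∈ GeoSeg G T f, ∀ g ∈ finStab G f, geoSmul hact g v = v) ∧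
    SmoothRel (fun a b : GeoSeg G T f => geoRel hact a b) := by
  have htriv : ∀ v ∈ GeoSeg G T f, ∀ g ∈ finStab G f, geoSmul hact g v = v := by
    intro v hv g hg
    rw [← hv.2] at hg
    exact Subtype.ext (funext hg)
  have hfix : ∀ v ∈ GeoSeg G T f, ∀ w ∈ GeoSeg G T f, ∀ g : G,
      geoSmul hact g v = w → g ∈ finStab G f := by
    intro v hv w hw g hg i
    have h := congrFun (congrArg Subtype.val hg) i.1
    change g • v.1 i.1 = w.1 i.1 at h
    rwa [hv.1, hw.1] at h
  refine ⟨?_, ?_, htriv, Set.univ, MeasurableSet.univ, ?_⟩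
  · have hset : GeoSeg G T f = (⋂ i : Fin (n + 1), {v : Geo T | v.1 i.1 = f i}) ∩
        ⋂ g : finStab G f, ⋂ k : ℕ, {v : Geo T | g.1 • v.1 k = v.1 k} := by
      ext v
      simp only [Set.mem_inter_iff, Set.mem_iInter, Set.mem_ofPred_eq]
      constructor
      · rintro ⟨h1, h2⟩
        refine ⟨h1, fun g k => ?_⟩
        exact h2.ge g.2 k
      · rintro ⟨h1, h2⟩
        refine ⟨h1, le_antisymm ?_ ?_⟩
        · intro g hg i
          rw [← h1 i]
          exact hg i.1
        · intro g hg k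
          exact h2 ⟨g, hg⟩ k
    have hc : ∀ k : ℕ, Continuous fun v : Geo T => v.1 k := fun k =>
      (continuous_apply k).comp continuous_subtype_val
    rw [hset]
    refine IsClosed.inter (isClosed_iInter fun i => isClosed_eq (hc _) continuous_const)
      (isClosed_iInter fun g => isClosed_iInter fun k => isClosed_eq ?_ (hc k))
    exact (continuous_of_discreteTopology (f := fun x : V => g.1 • x)).comp (hc k)
  · intro v hv w hw
    constructor
    · rintro ⟨g, hg⟩
      exact ⟨g, hfix v hv w hw g hg, hg⟩
    · rintro ⟨g, _, hg⟩
      exact ⟨g, hg⟩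
  · intro x
    refine ⟨x, ⟨Set.mem_univ _, 1, htriv _ x.2 1 (one_mem _)⟩, ?_⟩
    rintro y ⟨_, g, hg⟩
    have h := htriv _ x.2 g (hfix _ x.2 _ y.2 g hg)
    exact Subtype.ext (hg.symm.trans h)
end

section
/- Let G be a countable group acting on a countable tree T and let σ be a finite geodesic in T. Then the set Geo_σ(T) of infinite geodesics 𝐯 extending σ such that Stab_G(𝐯) is uniformly coamenable in Stab_G(σ) is a Borel subset of Geo(T). -/
open MeasureTheory Function Filter

/-! ### STATEMENT 13 -/

/-- `Geo_σ(T)`: the infinite geodesics extending the finite geodesic `σ = f` whose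
stabilizer is uniformly coamenable in the stabilizer of `σ`. -/
def GeoSegUC (G : Type*) {V : Type*} [Group G] [MulAction G V] (T : SimpleGraph V)
    {n : ℕ} (f : Fin (n + 1) → V) : Set (Geo T) :=
  {v : Geo T | (∀ i : Fin (n + 1), v.1 i.1 = f i) ∧
    UniformlyCoamenable ((ptwiseStab G v.1).subgroupOf (finStab G f))}

open scoped ENNReal in
lemma aux_dense (K : Type*) [Countable K] :
    ∃ Q : Set (K → ℝ), Q.Countable ∧ (∀ q ∈ Q, IsProbFun q) ∧
      ∀ p : K → ℝ, IsProbFun p → ∀ δ : ℝ, 0 < δ → ∃ q ∈ Q, l1dist p q < δ := by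
  classical
  letI : MeasurableSpace K := ⊤
  haveI : DiscreteMeasurableSpace K := ⟨fun _ => trivial⟩
  haveI : Fact ((1 : ℝ≥0∞) ≠ ∞) := ⟨ENNReal.one_ne_top⟩
  have hIntegr : ∀ p : {p : K → ℝ // IsProbFun p}, Integrable p.1 (Measure.count : Measure K) := by
    intro p
    exact integrable_count_iff.2 p.2.2.summable.norm
  let Φ : {p : K → ℝ // IsProbFun p} → Lp ℝ 1 (Measure.count : Measure K) :=
    fun p => (hIntegr p).toL1 p.1
  have hdist : ∀ p q, l1dist p.1 q.1 = dist (Φ p) (Φ q) := by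
    intro p q
    rw [dist_edist, Integrable.edist_toL1_toL1, lintegral_count,
      ENNReal.tsum_toReal_eq (fun a => edist_ne_top _ _)]
    simp only [l1dist, ← dist_edist, Real.dist_eq]
  obtain ⟨D, hDc, hDd⟩ := TopologicalSpace.exists_countable_dense (Set.range Φ)
  refine ⟨(fun z : Set.range Φ => (z.2.choose).1) '' D, hDc.image _, ?_, ?_⟩
  · rintro _ ⟨z, -, rfl⟩
    exact z.2.choose.2
  · intro p hp δ hδ
    obtain ⟨z, hz, hzd⟩ := Metric.dense_iff.1 hDd ⟨Φ ⟨p, hp⟩, Set.mem_range_self _⟩ δ hδ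
    refine ⟨_, ⟨z, hzd, rfl⟩, ?_⟩
    have := hdist ⟨p, hp⟩ z.2.choose
    simp only at this
    rw [this, z.2.choose_spec, dist_comm]
    exact hz

lemma aux_push_summable {K X : Type*} [Group K] [MulAction K X] {p : K → ℝ}
    (hp : Summable p) (x : X) :
    Summable (fun y => |pushMeasure p x y|) ∧
      ∑' y, |pushMeasure p x y| ≤ ∑' g, |p g| := by
  have h1 : Summable (fun z : Σ y : X, {g : K // g • x = y} => |p z.2.1|) :=
    (Equiv.sigmaFiberEquiv (fun g : K => g • x)).summable_iff.2 hp.abs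
  have h2 : ∑' z : Σ y : X, {g : K // g • x = y}, |p z.2.1| = ∑' g, |p g| :=
    (Equiv.sigmaFiberEquiv (fun g : K => g • x)).tsum_eq (fun g => |p g|)
  have h3 : ∀ y, |pushMeasure p x y| ≤ ∑' g : {g : K // g • x = y}, |p g.1| := by
    intro y
    exact norm_tsum_le_tsum_norm (f := fun g : {g : K // g • x = y} => p g.1)
      (hp.abs.subtype {g : K | g • x = y})
  have h4 : Summable (fun y => |pushMeasure p x y|) :=
    Summable.of_nonneg_of_le (fun _ => abs_nonneg _) h3 h1.sigma
  refine ⟨h4, ?_⟩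
  rw [← h2, h1.tsum_sigma]
  exact h4.tsum_le_tsum h3 h1.sigma

lemma aux_push_sub {K X : Type*} [Group K] [MulAction K X] {p q : K → ℝ}
    (hp : Summable p) (hq : Summable q) (x y : X) :
    pushMeasure (fun g => p g - q g) x y = pushMeasure p x y - pushMeasure q x y :=
  (hp.subtype {g : K | g • x = y}).tsum_sub (hq.subtype {g : K | g • x = y})

lemma aux_contract {K X : Type*} [Group K] [MulAction K X] {p q : K → ℝ}
    (hp : Summable p) (hq : Summable q) (x : X) :
    l1dist (pushMeasure p x) (pushMeasure q x) ≤ l1dist p q := by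
  have := (aux_push_summable (hp.sub hq) x).2
  simpa only [aux_push_sub hp hq, l1dist] using this

lemma aux_tri {A : Type*} {p q r : A → ℝ} (hp : Summable p) (hq : Summable q)
    (hr : Summable r) : l1dist p r ≤ l1dist p q + l1dist q r := by
  unfold l1dist
  rw [← (hp.sub hq).abs.tsum_add (hq.sub hr).abs]
  exact (hp.sub hr).abs.tsum_le_tsum (fun a => abs_sub_le _ _ _)
    ((hp.sub hq).abs.add (hq.sub hr).abs)

lemma aux_comm {A : Type*} (p q : A → ℝ) : l1dist p q = l1dist q p := by
  simp only [l1dist, abs_sub_comm]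

lemma aux_uc_iff {K : Type*} [Group K] (Q : Set (K → ℝ))
    (hQ : ∀ q ∈ Q, IsProbFun q)
    (hd : ∀ p : K → ℝ, IsProbFun p → ∀ δ : ℝ, 0 < δ → ∃ q ∈ Q, l1dist p q < δ)
    (H : Subgroup K) :
    UniformlyCoamenable H ↔ ∀ (S : Finset K) (m : ℕ), ∃ q ∈ Q, ∀ s ∈ S, ∀ k : K,
      l1dist (pushMeasure q (k : K ⧸ H)) (pushMeasure q ((s * k : K) : K ⧸ H))
        < 1 / ((m : ℝ) + 1) := by
  constructor
  · intro h S m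
    have hε : (0 : ℝ) < 1 / ((m : ℝ) + 1) := by positivity
    set ε := 1 / ((m : ℝ) + 1)
    obtain ⟨p, hp, hr⟩ := h S (ε / 2) (by positivity)
    obtain ⟨q, hq, hpq⟩ := hd p hp (ε / 4) (by positivity)
    refine ⟨q, hq, fun s hs k => ?_⟩
    have hps := hp.2.summable
    have hqs := (hQ q hq).2.summable
    have hP : ∀ x : K ⧸ H, Summable (pushMeasure p x) :=
      fun x => (aux_push_summable hps x).1.of_abs
    have hQ' : ∀ x : K ⧸ H, Summable (pushMeasure q x) :=
      fun x => (aux_push_summable hqs x).1.of_abs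
    have e1 := hr s hs (k : K ⧸ H)
    rw [show s • (k : K ⧸ H) = ((s * k : K) : K ⧸ H) from rfl] at e1
    have e2 := aux_tri (hQ' k) (hP k) (hQ' (s * k : K))
    have e3 := aux_tri (hP k) (hP (s * k : K)) (hQ' (s * k : K))
    have e4 := aux_contract hps hqs (k : K ⧸ H)
    have e5 := aux_contract hps hqs ((s * k : K) : K ⧸ H)
    rw [aux_comm] at e4
    linarith
  · intro h S ε hε
    obtain ⟨m, hm⟩ := exists_nat_one_div_lt hε
    obtain ⟨q, hq, hr⟩ := h S m
    refine ⟨q, hQ q hq, fun s hs x => ?_⟩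
    induction x using QuotientGroup.induction_on with
    | H k => exact (hr s hs k).trans hm

open scoped ENNReal in
open Classical in
lemma aux_push_formula {K : Type*} [Group K] (H : Subgroup K) {q : K → ℝ}
    (hq : ∀ g, 0 ≤ q g) (k c : K) :
    pushMeasure q (k : K ⧸ H) (c : K ⧸ H) =
      (∑' g : K, if (g * k)⁻¹ * c ∈ H then ENNReal.ofReal (q g) else 0).toReal := by
  rw [ENNReal.tsum_toReal_eq (fun a => by split_ifs <;> simp)]
  unfold pushMeasure
  rw [show (∑' g : {g : K // g • (k : K ⧸ H) = (c : K ⧸ H)}, q g.1) =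
    ∑' g, Set.indicator {g : K | g • (k : K ⧸ H) = (c : K ⧸ H)} q g from tsum_subtype _ q]
  refine tsum_congr fun g => ?_
  have : g • (k : K ⧸ H) = (c : K ⧸ H) ↔ (g * k)⁻¹ * c ∈ H := by
    rw [show g • (k : K ⧸ H) = ((g * k : K) : K ⧸ H) from rfl, QuotientGroup.eq]
  simp only [Set.indicator, Set.mem_setOf_eq, this]
  split_ifs <;> simp [hq]

open scoped ENNReal in
open Classical in
lemma aux_tsum_quot {K : Type*} [Group K] (H : Subgroup K) (e : K → ℕ)
    (he : Function.Injective e) (F : K ⧸ H → ℝ≥0∞) :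
    ∑' y, F y = ∑' c : K, if (∀ d : K, c⁻¹ * d ∈ H → e c ≤ e d) then F (c : K ⧸ H) else 0 := by
  let A : Set K := {c | ∀ d : K, c⁻¹ * d ∈ H → e c ≤ e d}
  have hb : Function.Bijective (fun c : A => ((c.1 : K) : K ⧸ H)) := by
    constructor
    · intro a b hab
      have h1 := QuotientGroup.eq.1 hab
      have h2 := QuotientGroup.eq.1 hab.symm
      exact Subtype.ext (he (le_antisymm (a.2 _ h1) (b.2 _ h2)))
    · intro y
      have hne : ∃ n, ∃ c : K, (c : K ⧸ H) = y ∧ e c = n := by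
        obtain ⟨c, rfl⟩ := QuotientGroup.mk_surjective y
        exact ⟨_, c, rfl, rfl⟩
      obtain ⟨c, hc, hcn⟩ := Nat.find_spec hne
      refine ⟨⟨c, fun d hd => ?_⟩, hc⟩
      rw [hcn]
      exact Nat.find_min' hne ⟨d, (QuotientGroup.eq.2 hd).symm.trans hc, rfl⟩
  rw [← (Equiv.ofBijective _ hb).tsum_eq F]
  rw [show (∑' c : A, F ((Equiv.ofBijective _ hb) c)) =
    ∑' c, Set.indicator A (fun c : K => F (c : K ⧸ H)) c from
      tsum_subtype A (fun c : K => F (c : K ⧸ H))]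
  rfl

open scoped ENNReal in
open Classical in
lemma aux_measurable {K Ω : Type*} [Group K] [Countable K] [MeasurableSpace Ω]
    (H : Ω → Subgroup K) (hH : ∀ k : K, MeasurableSet {ω | k ∈ H ω})
    {q : K → ℝ} (hq : ∀ g, 0 ≤ q g) (k l : K) :
    Measurable (fun ω => l1dist (pushMeasure q (k : K ⧸ H ω)) (pushMeasure q (l : K ⧸ H ω))) := by
  obtain ⟨e, he⟩ := exists_injective_nat K
  have hpush : ∀ k c : K, Measurable (fun ω => pushMeasure q (k : K ⧸ H ω) (c : K ⧸ H ω)) := by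
    intro k c
    simp only [aux_push_formula _ hq]
    exact (Measurable.ennreal_tsum fun g =>
      Measurable.ite (hH _) measurable_const measurable_const).ennreal_toReal
  have key : ∀ ω, l1dist (pushMeasure q (k : K ⧸ H ω)) (pushMeasure q (l : K ⧸ H ω)) =
      (∑' c : K, if (∀ d : K, c⁻¹ * d ∈ H ω → e c ≤ e d) then
        ENNReal.ofReal |pushMeasure q (k : K ⧸ H ω) (c : K ⧸ H ω) -
          pushMeasure q (l : K ⧸ H ω) (c : K ⧸ H ω)| else 0).toReal := by
    intro ω
    rw [← aux_tsum_quot (H ω) e he (fun y => ENNReal.ofReal |pushMeasure q (k : K ⧸ H ω) y -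
          pushMeasure q (l : K ⧸ H ω) y|), ENNReal.tsum_toReal_eq (fun _ => ENNReal.ofReal_ne_top)]
    simp only [ENNReal.toReal_ofReal (abs_nonneg _), l1dist]
  simp only [key]
  refine (Measurable.ennreal_tsum fun c => Measurable.ite ?_ ?_ measurable_const).ennreal_toReal
  · simp only [Set.setOf_forall]
    refine MeasurableSet.iInter fun d => ?_
    by_cases hcd : e c ≤ e d
    · simp [hcd]
    · simp only [hcd, imp_false]
      exact (hH (c⁻¹ * d)).compl
  · have := ((hpush k c).sub (hpush l c)).norm.ennreal_ofReal
    exact this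

lemma aux_main {K Ω : Type*} [Group K] [Countable K] [MeasurableSpace Ω]
    (H : Ω → Subgroup K) (hH : ∀ k : K, MeasurableSet {ω | k ∈ H ω}) :
    MeasurableSet {ω | UniformlyCoamenable (H ω)} := by
  obtain ⟨Q, hQc, hQ, hd⟩ := aux_dense K
  simp only [aux_uc_iff Q hQ hd]
  simp only [Set.setOf_forall]
  refine MeasurableSet.iInter fun S => MeasurableSet.iInter fun m => ?_
  have : {ω | ∃ q ∈ Q, ∀ s ∈ S, ∀ k : K,
      l1dist (pushMeasure q (k : K ⧸ H ω)) (pushMeasure q ((s * k : K) : K ⧸ H ω))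
        < 1 / ((m : ℝ) + 1)} = ⋃ q ∈ Q, ⋂ s ∈ S, ⋂ k : K, {ω |
      l1dist (pushMeasure q (k : K ⧸ H ω)) (pushMeasure q ((s * k : K) : K ⧸ H ω))
        < 1 / ((m : ℝ) + 1)} := by
    ext ω; simp
  rw [this]
  refine MeasurableSet.biUnion hQc fun q hq => ?_
  refine Finset.measurableSet_biInter S fun s _ => MeasurableSet.iInter fun k => ?_
  exact measurableSet_lt (aux_measurable H hH (hQ q hq).1 _ _) measurable_const

theorem geoSegUC_borel
    {V : Type*} [Countable V] [MeasurableSpace V] [DiscreteMeasurableSpace V]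
    (T : SimpleGraph V) (hT : T.IsTree)
    {G : Type*} [Group G] [Countable G] [MulAction G V]
    (hact : IsGraphAction T G)
    (n : ℕ) (f : Fin (n + 1) → V) (hinj : Function.Injective f)
    (hadj : ∀ i : Fin n, T.Adj (f i.castSucc) (f i.succ)) :
    MeasurableSet (GeoSegUC G T f) := by
  have hv : ∀ j : ℕ, Measurable (fun v : Geo T => v.1 j) :=
    fun j => (measurable_pi_apply j).comp measurable_subtype_coe
  have h1 : MeasurableSet {v : Geo T | ∀ i : Fin (n + 1), v.1 i.1 = f i} := by
    rw [Set.setOf_forall]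
    exact MeasurableSet.iInter fun i => hv i.1 (MeasurableSet.of_discrete (s := {f i}))
  have h2 : MeasurableSet {v : Geo T |
      UniformlyCoamenable ((ptwiseStab G v.1).subgroupOf (finStab G f))} := by
    refine aux_main (K := finStab G f)
      (fun v : Geo T => (ptwiseStab G v.1).subgroupOf (finStab G f)) fun k => ?_
    have : {v : Geo T | k ∈ (ptwiseStab G v.1).subgroupOf (finStab G f)} =
        ⋂ j : ℕ, {v : Geo T | k.1 • v.1 j = v.1 j} := by
      ext v
      rw [Set.mem_iInter]
      exact Subgroup.mem_subgroupOf (H := ptwiseStab G v.1) (K := finStab G f) (h := k)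
    rw [this]
    exact MeasurableSet.iInter fun j =>
      hv j (MeasurableSet.of_discrete (s := {x : V | k.1 • x = x}))
  exact h1.inter h2
end

section
/- Let G be a countable residually finite non-amenable group. Then there exists a rooted action G ↷ T on a countable tree and a Borel probability measure μ on the Gromov boundary ∂T such that the induced boundary action G ↷ ∂T is free and μ-preserving, and the orbit equivalence relation E_G^{∂T} is not μ-hyperfinite. -/
open MeasureTheory Function Filter

/-! ### STATEMENT 16 -/

section PermAction

variable {V : Type*} {G : Type*} [Group G]

/-- The Borel structure on `Geo T` for a countable vertex set `V`
(the discrete σ-algebra on `V`, the product σ-algebra on `ℕ → V`). -/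
def geoMSexp (T : SimpleGraph V) : MeasurableSpace (Geo T) :=
  MeasurableSpace.comap (fun v : Geo T => (v : ℕ → V))
    (@MeasurableSpace.pi ℕ (fun _ => V) (fun _ => ⊤))

/-- The quotient Borel structure on the Gromov boundary `∂T = Geo(T)/ℕ`. -/
def bdryMSexp (T : SimpleGraph V) : MeasurableSpace (Bdry T) :=
  (geoMSexp T).map (Quotient.mk (tailSetoid T))

/-- The coordinatewise action on `Geo T` of a group acting on `T` by graph
automorphisms via a permutation representation `φ`. -/
def permGeoSmul (T : SimpleGraph V) (φ : G →* Equiv.Perm V)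
    (h : ∀ (g : G) (v w : V), T.Adj v w ↔ T.Adj (φ g v) (φ g w))
    (g : G) (v : Geo T) : Geo T :=
  ⟨fun n => φ g (v.1 n), (Equiv.injective (φ g)).comp v.2.1,
   fun n => (h g _ _).mp (v.2.2 n)⟩

lemma geoShift_permGeoSmul (T : SimpleGraph V) (φ : G →* Equiv.Perm V)
    (h : ∀ (g : G) (v w : V), T.Adj v w ↔ T.Adj (φ g v) (φ g w))
    (g : G) (v : Geo T) :
    geoShift T (permGeoSmul T φ h g v) = permGeoSmul T φ h g (geoShift T v) := rfl

lemma iterate_geoShift_permGeoSmul (T : SimpleGraph V) (φ : G →* Equiv.Perm V)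
    (h : ∀ (g : G) (v w : V), T.Adj v w ↔ T.Adj (φ g v) (φ g w))
    (g : G) (m : ℕ) (v : Geo T) :
    (geoShift T)^[m] (permGeoSmul T φ h g v)
      = permGeoSmul T φ h g ((geoShift T)^[m] v) := by
  induction m generalizing v with
  | zero => rfl
  | succ m ih =>
      rw [Function.iterate_succ_apply, Function.iterate_succ_apply,
        geoShift_permGeoSmul, ih]

lemma tailRel_permGeoSmul (T : SimpleGraph V) (φ : G →* Equiv.Perm V)
    (h : ∀ (g : G) (v w : V), T.Adj v w ↔ T.Adj (φ g v) (φ g w))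
    (g : G) {v w : Geo T} (hvw : tailRel T v w) :
    tailRel T (permGeoSmul T φ h g v) (permGeoSmul T φ h g w) := by
  induction hvw with
  | rel a b hab =>
      obtain ⟨m, rfl⟩ := hab
      exact Relation.EqvGen.rel _ _ ⟨m, (iterate_geoShift_permGeoSmul T φ h g m a).symm⟩
  | refl a => exact Relation.EqvGen.refl _
  | symm a b _ ih => exact Relation.EqvGen.symm _ _ ih
  | trans a b c _ _ ih1 ih2 => exact Relation.EqvGen.trans _ _ _ ih1 ih2

/-- The induced boundary action. -/
def permBdrySmul (T : SimpleGraph V) (φ : G →* Equiv.Perm V)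
    (h : ∀ (g : G) (v w : V), T.Adj v w ↔ T.Adj (φ g v) (φ g w))
    (g : G) : Bdry T → Bdry T :=
  Quotient.map (permGeoSmul T φ h g) (fun _ _ hab => tailRel_permGeoSmul T φ h g hab)

end PermAction


/-! ### Auxiliary material for the proof -/

section AuxTree

/-- The graph of a parent function. -/
def parentGraph {V : Type*} (d : V → ℕ) (p : V → V) : SimpleGraph V where
  Adj v w := (d v = d w + 1 ∧ p v = w) ∨ (d w = d v + 1 ∧ p w = v)
  symm := ⟨fun _ _ h => h.symm⟩
  loopless := ⟨fun v h => by rcases h with h | h <;> omega⟩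

variable {V : Type*} {d : V → ℕ} {p : V → V} {r : V}

lemma parentGraph_isTree (hd : ∀ v, d (p v) = d v - 1) (hr : ∀ v, d v = 0 ↔ v = r) :
    (parentGraph d p).IsTree := by
  have hreach : ∀ n v, d v = n → (parentGraph d p).Reachable v r := by
    intro n
    induction n with
    | zero => intro v hv; rw [(hr v).1 hv]
    | succ n ih =>
      intro v hv
      have h1 : (parentGraph d p).Adj v (p v) := Or.inl ⟨by rw [hd]; omega, rfl⟩
      exact h1.reachable.trans (ih _ (by rw [hd]; omega))
  have key : ∀ v, d v ≠ 0 → ¬ ((parentGraph d p).deleteEdges {s(v, p v)}).Reachable v (p v) := by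
    intro v hv hre
    have hcl : ∀ a b, ((parentGraph d p).deleteEdges {s(v, p v)}).Walk a b →
        (∃ k, p^[k] a = v ∧ d a = d v + k) → (∃ k, p^[k] b = v ∧ d b = d v + k) := by
      intro a b w
      induction w with
      | nil => exact id
      | @cons x y z hxy _ ih =>
        rintro ⟨k, hk, hdk⟩
        apply ih
        rw [SimpleGraph.deleteEdges_adj] at hxy
        obtain ⟨hA, hne⟩ := hxy
        rcases hA with ⟨h1, h2⟩ | ⟨h1, h2⟩
        · cases k with
          | zero =>
            simp only [Function.iterate_zero, id] at hk
            exact absurd (by rw [← hk, h2]; rfl) hne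
          | succ k =>
            rw [Function.iterate_succ_apply, h2] at hk
            exact ⟨k, hk, by omega⟩
        · exact ⟨k + 1, by rw [Function.iterate_succ_apply, h2, hk], by omega⟩
    obtain ⟨w⟩ := hre
    obtain ⟨k, _, h⟩ := hcl _ _ w ⟨0, rfl, rfl⟩
    rw [hd] at h
    omega
  have hne : Nonempty V := ⟨r⟩
  refine ⟨⟨fun u v => (hreach _ u rfl).trans (hreach _ v rfl).symm⟩, ?_⟩
  rw [SimpleGraph.isAcyclic_iff_forall_adj_isBridge]
  intro v w hvw
  rw [SimpleGraph.isBridge_iff]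
  rcases hvw with ⟨h1, rfl⟩ | ⟨h1, rfl⟩
  · exact key v (by omega)
  · intro h
    rw [Sym2.eq_swap] at h
    exact key w (by omega) h.symm

/-- Along a geodesic the depth eventually increases by one at each step. -/
lemma parentGraph_geo_depth (v : Geo (parentGraph d p)) :
    ∃ k₀, ∀ j, d (v.1 (k₀ + j)) = d (v.1 k₀) + j := by
  have step : ∀ k, d (v.1 (k + 1)) = d (v.1 k) + 1 → d (v.1 (k + 2)) = d (v.1 (k + 1)) + 1 := by
    intro k hk
    have h1 := v.2.2 k
    have h2 := v.2.2 (k + 1)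
    rcases h1 with h1 | h1
    · omega
    rcases h2 with h2 | h2
    · have : v.1 k = v.1 (k + 2) := h1.2.symm.trans h2.2
      have := v.2.1 this
      omega
    · exact h2.1
  have hex : ∃ k, d (v.1 (k + 1)) = d (v.1 k) + 1 := by
    by_contra hcon
    push Not at hcon
    have : ∀ k, d (v.1 k) + k = d (v.1 0) := by
      intro k
      induction k with
      | zero => rfl
      | succ k ih =>
        rcases v.2.2 k with h | h
        · omega
        · exact absurd h.1 (hcon k)
    have := this (d (v.1 0) + 1)
    omega
  obtain ⟨k, hk⟩ := hex
  have hall : ∀ j, d (v.1 (k + j + 1)) = d (v.1 (k + j)) + 1 := by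
    intro j
    induction j with
    | zero => exact hk
    | succ j ih => exact step _ ih
  refine ⟨k, fun j => ?_⟩
  induction j with
  | zero => rfl
  | succ j ih => rw [← add_assoc, hall j, ih]; omega

lemma geoShift_iterate_apply (T : SimpleGraph V) (m : ℕ) (v : Geo T) (k : ℕ) :
    ((geoShift T)^[m] v).1 k = v.1 (m + k) := by
  induction m generalizing v with
  | zero => simp
  | succ m ih =>
    rw [Function.iterate_succ_apply, ih]
    exact congrArg v.1 (by omega)

lemma tailRel_exists (T : SimpleGraph V) {v w : Geo T} (h : tailRel T v w) :
    ∃ m n, ∀ k, v.1 (m + k) = w.1 (n + k) := by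
  induction h with
  | rel a b hab =>
    obtain ⟨m, rfl⟩ := hab
    exact ⟨m, 0, fun k => by rw [geoShift_iterate_apply]; simp⟩
  | refl a => exact ⟨0, 0, fun k => rfl⟩
  | symm a b _ ih =>
    obtain ⟨m, n, h⟩ := ih
    exact ⟨n, m, fun k => (h k).symm⟩
  | trans a b c _ _ ih1 ih2 =>
    obtain ⟨m, n, h⟩ := ih1
    obtain ⟨m', n', h'⟩ := ih2
    refine ⟨m + m', n' + n, fun k => ?_⟩
    have e1 := h (m' + k)
    have e2 := h' (n + k)
    rw [show m + m' + k = m + (m' + k) by omega, e1,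
      show n' + n + k = n' + (n + k) by omega, ← e2]
    exact congrArg b.1 (by omega)

/-- A depth preserving map fixing an end fixes vertices of arbitrarily large depth. -/
lemma fixes_deep (v : Geo (parentGraph d p)) (f : V → V) (hf : ∀ x, d (f x) = d x)
    (h : ∃ m n, ∀ k, f (v.1 (m + k)) = v.1 (n + k)) (N : ℕ) : ∃ x, N ≤ d x ∧ f x = x := by
  obtain ⟨m, n, h⟩ := h
  obtain ⟨k₀, hk⟩ := parentGraph_geo_depth v
  have h1 := hk (m + N)
  have h2 := hk (n + N)
  have h3 := h (k₀ + N)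
  have h4 := hf (v.1 (m + (k₀ + N)))
  rw [h3, show n + (k₀ + N) = k₀ + (n + N) by omega,
    show m + (k₀ + N) = k₀ + (m + N) by omega] at h4
  have hmn : m = n := by omega
  subst hmn
  refine ⟨_, ?_, h3⟩
  rw [show m + (k₀ + N) = k₀ + (m + N) by omega]
  omega

end AuxTree

section AuxAmen

variable {G : Type*}

/-- Uniform probability on a finite subset. -/
noncomputable def unif (C : Set G) (g : G) : ℝ :=
  C.indicator 1 g / (∑' h, C.indicator (1 : G → ENNReal) h).toReal

lemma unif_nonneg (C : Set G) (g : G) : 0 ≤ unif C g :=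
  div_nonneg (Set.indicator_nonneg (fun _ _ => zero_le_one) _) ENNReal.toReal_nonneg

lemma unif_hasSum {C : Set G} (hf : C.Finite) (hn : C.Nonempty) : HasSum (unif C) 1 := by
  classical
  obtain ⟨F, rfl⟩ : ∃ F : Finset G, (F : Set G) = C := ⟨hf.toFinset, by simp⟩
  have hN : (∑' h, (F : Set G).indicator (1 : G → ENNReal) h) = F.card := by
    rw [tsum_eq_sum (s := F)]
    · rw [Finset.sum_congr rfl (g := fun _ => 1)]
      · simp
      · intro x hx; simp [hx]
    · intro b hb; simp [hb]
  have hc : (F.card : ℝ) ≠ 0 := by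
    have : F.Nonempty := by simpa using hn
    exact_mod_cast this.card_pos.ne'
  have h1 : HasSum (unif (F : Set G)) (∑ g ∈ F, unif (F : Set G) g) := by
    apply hasSum_sum_of_ne_finset_zero
    intro b hb
    simp [unif, hb]
  convert h1
  rw [Finset.sum_congr rfl (g := fun _ => 1 / (F.card : ℝ))]
  · simp [hc]
  · intro x hx
    simp [unif, hN, hx]

lemma unif_sum_le {C : Set G} (hf : C.Finite) (hn : C.Nonempty) (s : Finset G) :
    ∑ g ∈ s, unif C g ≤ 1 :=
  sum_le_hasSum s (fun i _ => unif_nonneg C i) (unif_hasSum hf hn)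

lemma unif_mul [Group G] {C C' : Set G} (s : G) (h : ∀ g, g ∈ C' ↔ g * s ∈ C) (g : G) :
    unif C' g = unif C (g * s) := by
  classical
  unfold unif
  have h1 : ∀ (R : Type) [Zero R] [One R] (g : G),
      C'.indicator (1 : G → R) g = C.indicator (1 : G → R) (g * s) := by
    intro R _ _ g
    simp [Set.indicator_apply, h]
  have h2 : ∑' h, C'.indicator (1 : G → ENNReal) h = ∑' h, C.indicator (1 : G → ENNReal) h := by
    rw [← (Equiv.mulRight s).tsum_eq (C.indicator (1 : G → ENNReal))]
    exact tsum_congr fun g => h1 _ g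
  rw [h2, h1]

lemma reiter_of_sets {X : Type*} [MeasurableSpace X] (μ : Measure X) [IsProbabilityMeasure μ]
    [Group G] [Countable G] (a : G → X → X) (ha : ∀ g, MeasurePreserving (a g) μ μ)
    (C : ℕ → X → Set G) (hCm : ∀ n g, MeasurableSet {x | g ∈ C n x})
    (hCf : ∀ n x, (C n x).Finite) (hC1 : ∀ n, ∀ᵐ x ∂μ, (1 : G) ∈ C n x)
    (hCt : ∀ g, ∀ᵐ x ∂μ, ∀ᶠ n in atTop, g ∈ C n x)
    (hCs : ∀ n s, ∀ᵐ x ∂μ, s ∈ C n x → ∀ g, g ∈ C n (a s x) ↔ g * s ∈ C n x) :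
    ReiterAmenable G := by
  classical
  have hmeas : ∀ n g, Measurable fun x => unif (C n x) g := by
    intro n g
    have hi : ∀ (R : Type) [MeasurableSpace R] [Zero R] [One R] (g : G),
        Measurable fun x => (C n x).indicator (1 : G → R) g := by
      intro R _ _ _ g
      have : (fun x => (C n x).indicator (1 : G → R) g)
          = fun x => {x | g ∈ C n x}.indicator (fun _ => (1 : R)) x := by
        funext x; simp [Set.indicator_apply]
      rw [this]
      exact measurable_const.indicator (hCm n g)
    exact (hi ℝ g).div (Measurable.tsum fun h => hi ENNReal h).ennreal_toReal
  have hprob : ∀ n, ∀ᵐ x ∂μ, HasSum (unif (C n x)) 1 := fun n => by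
    filter_upwards [hC1 n] with x hx using unif_hasSum (hCf n x) ⟨1, hx⟩
  have hle : ∀ n g, ∀ᵐ x ∂μ, ‖unif (C n x) g‖ ≤ 1 := fun n g => by
    filter_upwards [hC1 n] with x hx
    rw [Real.norm_of_nonneg (unif_nonneg _ _)]
    simpa using unif_sum_le (hCf n x) ⟨1, hx⟩ {g}
  have hint : ∀ n g, Integrable (fun x => unif (C n x) g) μ := fun n g =>
    Integrable.of_bound (hmeas n g).aestronglyMeasurable 1 (hle n g)
  intro S ε hε
  -- the bad sets have small measure
  have hbad : ∀ s, Tendsto (fun n => μ.real {x | s ∉ C n x}) atTop (nhds 0) := by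
    intro s
    have hm : ∀ n, MeasurableSet {x | s ∉ C n x} := fun n => (hCm n s).compl
    have := tendsto_measure_of_ae_tendsto_indicator_of_isFiniteMeasure (μ := μ) atTop
      (A := ∅) (As := fun n => {x | s ∉ C n x}) MeasurableSet.empty hm (by
        filter_upwards [hCt s] with x hx
        filter_upwards [hx] with n hn
        simp [hn])
    rw [measure_empty] at this
    exact (ENNReal.tendsto_toReal ENNReal.zero_ne_top).comp this
  have hev : ∀ᶠ n in atTop, ∀ s ∈ S, μ.real {x | s ∉ C n x} < ε / 4 := by
    rw [Filter.eventually_all_finset]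
    intro s _
    exact (hbad s).eventually_lt_const (by positivity)
  obtain ⟨n, hn⟩ := hev.exists
  set q : G → ℝ := fun g => ∫ x, unif (C n x) g ∂μ with hq
  have hq0 : ∀ g, 0 ≤ q g := fun g => integral_nonneg fun x => unif_nonneg _ _
  have hqsum : HasSum q 1 := by
    have hsum : Summable fun g => ∫ x, ‖unif (C n x) g‖ ∂μ := by
      refine summable_of_sum_le (c := 1) (fun g => integral_nonneg fun x => norm_nonneg _) ?_
      intro u
      rw [← integral_finsetSum _ fun g _ => (hint n g).norm]
      calc ∫ x, ∑ g ∈ u, ‖unif (C n x) g‖ ∂μ ≤ ∫ x, (1 : ℝ) ∂μ := by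
            refine integral_mono_ae (integrable_finsetSum _ fun g _ => (hint n g).norm)
              (integrable_const _) ?_
            filter_upwards [hC1 n] with x hx
            simp_rw [Real.norm_of_nonneg (unif_nonneg _ _)]
            exact unif_sum_le (hCf n x) ⟨1, hx⟩ u
        _ = 1 := by simp
    have := hasSum_integral_of_summable_integral_norm (fun g => hint n g) hsum
    have h1 : ∫ x, ∑' g, unif (C n x) g ∂μ = 1 := by
      rw [integral_congr_ae (g := fun _ => (1 : ℝ))]
      · simp
      · filter_upwards [hprob n] with x hx using hx.tsum_eq
    rwa [h1] at this
  have hdist : ∀ s ∈ S, ∑' g, |q g - q (g * s)| < ε := by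
    intro s hs
    have hb : ∑' g, |q g - q (g * s)| ≤ 2 * μ.real {x | s ∉ C n x} := by
      refine Real.tsum_le_of_sum_le (fun g => abs_nonneg _) ?_
      intro u
      have hint' : ∀ g, Integrable (fun x => unif (C n (a s x)) g) μ := fun g =>
        (ha s).integrable_comp_of_integrable (hint n g)
      have hqg : ∀ g, q g = ∫ x, unif (C n (a s x)) g ∂μ := by
        intro g
        have h1 := integral_map (μ := μ) (ha s).measurable.aemeasurable
          (f := fun x => unif (C n x) g) (hmeas n g).aestronglyMeasurable
        rw [(ha s).map_eq] at h1
        exact h1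
      have hd : ∀ g, Integrable (fun x => |unif (C n (a s x)) g - unif (C n x) (g * s)|) μ :=
        fun g => ((hint' g).sub (hint n (g * s))).abs
      have hCa : ∀ᵐ x ∂μ, (1 : G) ∈ C n (a s x) :=
        (ha s).quasiMeasurePreserving.ae (hC1 n)
      calc ∑ g ∈ u, |q g - q (g * s)|
          ≤ ∑ g ∈ u, ∫ x, |unif (C n (a s x)) g - unif (C n x) (g * s)| ∂μ := by
            refine Finset.sum_le_sum fun g _ => ?_
            rw [hqg g, hq]
            simp only
            rw [← integral_sub (hint' g) (hint n (g * s))]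
            exact abs_integral_le_integral_abs
        _ = ∫ x, ∑ g ∈ u, |unif (C n (a s x)) g - unif (C n x) (g * s)| ∂μ :=
            (integral_finsetSum _ fun g _ => hd g).symm
        _ ≤ ∫ x, {x | s ∉ C n x}.indicator (fun _ => (2 : ℝ)) x ∂μ := by
            refine integral_mono_ae (integrable_finsetSum _ fun g _ => hd g)
              ((integrable_const _).indicator (hCm n s).compl) ?_
            filter_upwards [hC1 n, hCa, hCs n s] with x h1 h2 h3
            by_cases hsx : s ∈ C n x
            · have h4 := h3 hsx
              simp only [Set.indicator_apply, Set.mem_ofPred_eq, hsx, not_true, if_false]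
              refine le_of_eq (Finset.sum_eq_zero fun g _ => ?_)
              rw [unif_mul s h4 g, sub_self, abs_zero]
            · simp only [Set.indicator_apply, Set.mem_ofPred_eq, hsx, not_false_iff, if_true]
              have e1 := unif_sum_le (hCf n (a s x)) ⟨1, h2⟩ u
              have e2 := unif_sum_le (hCf n x) ⟨1, h1⟩ (u.map (Equiv.mulRight s).toEmbedding)
              rw [Finset.sum_map] at e2
              calc ∑ g ∈ u, |unif (C n (a s x)) g - unif (C n x) (g * s)|
                  ≤ ∑ g ∈ u, (unif (C n (a s x)) g + unif (C n x) (g * s)) := by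
                    refine Finset.sum_le_sum fun g _ => ?_
                    have := unif_nonneg (C n (a s x)) g
                    have := unif_nonneg (C n x) (g * s)
                    rw [abs_le]; constructor <;> linarith
                _ ≤ 1 + 1 := by
                    rw [Finset.sum_add_distrib]
                    exact add_le_add e1 e2
                _ = 2 := by norm_num
        _ = 2 * μ.real {x | s ∉ C n x} := by
            have hm : MeasurableSet {x | s ∉ C n x} := (hCm n s).compl
            rw [integral_indicator hm, setIntegral_const, smul_eq_mul, mul_comm]
    have := hn s hs
    linarith
  refine ⟨fun g => q g⁻¹, ⟨fun g => hq0 _, (Equiv.inv G).hasSum_iff.2 hqsum⟩, fun s hs => ?_⟩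
  refine lt_of_le_of_lt (le_of_eq ?_) (hdist s hs)
  unfold l1dist
  rw [← (Equiv.inv G).tsum_eq]
  refine tsum_congr fun g => ?_
  simp

lemma not_muHyperfinite {X : Type*} [MeasurableSpace X] (μ : Measure X) [IsProbabilityMeasure μ]
    [Group G] [Countable G] (hna : ¬ ReiterAmenable G)
    (a : G → X → X) (ha : ∀ g, MeasurePreserving (a g) μ μ)
    (ha1 : ∀ x, a 1 x = x) (hmul : ∀ g h x, a (g * h) x = a g (a h x))
    (hfree : ∀ g, g ≠ 1 → ∀ x, a g x ≠ x) :
    ¬ MuHyperfinite (fun x y => ∃ g : G, a g x = y) μ := by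
  rintro ⟨A, hA, hA0, F, hF, hmono, hE⟩
  apply hna
  have hinj : ∀ x g h, a g x = a h x → g = h := by
    intro x g h hgh
    by_contra hne
    refine hfree (h⁻¹ * g) (fun h1 => hne (by rw [inv_mul_eq_one] at h1; exact h1.symm)) x ?_
    rw [hmul, hgh, ← hmul, inv_mul_cancel, ha1]
  have hAe : ∀ᵐ x ∂μ, ∀ g, a g x ∈ A := by
    rw [ae_all_iff]
    intro g
    exact (ha g).quasiMeasurePreserving.ae (p := fun x => x ∈ A) hA0
  refine reiter_of_sets μ a ha
    (fun n x => {g | ∃ (hx : x ∈ A) (hg : a g x ∈ A), F n ⟨x, hx⟩ ⟨a g x, hg⟩}) ?_ ?_ ?_ ?_ ?_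
  · intro n g
    have hemb : MeasurableSet (Prod.map (Subtype.val : A → X) (Subtype.val : A → X) ''
        {p : A × A | F n p.1 p.2}) :=
      ((MeasurableEmbedding.subtype_coe hA).prodMap
        (MeasurableEmbedding.subtype_coe hA)).measurableSet_image' (hF n).2.1
    have hm : Measurable fun x => (x, a g x) := measurable_id.prodMk (ha g).measurable
    convert hm hemb using 1
    ext x
    constructor
    · rintro ⟨hx, hg, h⟩
      exact ⟨(⟨x, hx⟩, ⟨a g x, hg⟩), h, rfl⟩
    · rintro ⟨⟨⟨y, hy⟩, ⟨z, hz⟩⟩, h, he⟩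
      simp only [Prod.map_apply, Prod.mk.injEq] at he
      obtain ⟨rfl, rfl⟩ := he
      exact ⟨hy, hz, h⟩
  · intro n x
    by_cases hx : x ∈ A
    · have hfin := ((hF n).2.2 ⟨x, hx⟩).image (Subtype.val : A → X)
      refine Set.Finite.of_finite_image (f := fun g => a g x) (hfin.subset ?_)
        (fun g _ h _ hgh => hinj x g h hgh)
      rintro _ ⟨g, ⟨_, hg, h⟩, rfl⟩
      exact ⟨⟨a g x, hg⟩, h, rfl⟩
    · convert Set.finite_empty
      ext g
      simp [hx]
  · intro n
    filter_upwards [hAe] with x hx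
    have h1 := hx 1
    have hx0 : x ∈ A := by rwa [ha1] at h1
    refine ⟨hx0, h1, ?_⟩
    have : (⟨a 1 x, h1⟩ : A) = ⟨x, hx0⟩ := Subtype.ext (ha1 x)
    rw [this]
    exact (hF n).1.refl _
  · intro g
    filter_upwards [hAe] with x hx
    have hx0 : x ∈ A := by have h1 := hx 1; rwa [ha1] at h1
    obtain ⟨i, hi⟩ := (hE ⟨x, hx0⟩ ⟨a g x, hx g⟩).1 ⟨g, rfl⟩
    refine eventually_atTop.2 ⟨i, fun n hn => ⟨hx0, hx g, ?_⟩⟩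
    induction n, hn using Nat.le_induction with
    | base => exact hi
    | succ n _ ih => exact hmono _ _ _ ih
  · intro n s
    filter_upwards [hAe] with x hx
    rintro ⟨hx0, hs, h⟩ g
    constructor
    · rintro ⟨_, hg, h'⟩
      refine ⟨hx0, hx _, ?_⟩
      have : (⟨a (g * s) x, hx _⟩ : A) = ⟨a g (a s x), hg⟩ := Subtype.ext (hmul g s x)
      rw [this]
      exact (hF n).1.trans h h'
    · rintro ⟨_, hg, h'⟩
      have hg' : a g (a s x) ∈ A := by rw [← hmul]; exact hg
      refine ⟨hs, hg', ?_⟩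
      have : (⟨a g (a s x), hg'⟩ : A) = ⟨a (g * s) x, hg⟩ := Subtype.ext (hmul g s x).symm
      rw [this]
      exact (hF n).1.trans ((hF n).1.symm h) h'

end AuxAmen

section AuxMain

variable {G : Type} [Group G] (N : ℕ → Subgroup G)

/-- Vertices of the tree: finite sequences of cosets. -/
abbrev SeqV : Type := Σ n : ℕ, ((i : Fin n) → G ⧸ N i)

/-- The parent of a finite sequence: drop the last entry. -/
def seqParent (v : SeqV N) : SeqV N :=
  ⟨v.1 - 1, fun i => v.2 ⟨i, by have := i.2; omega⟩⟩

/-- The tree of finite sequences. -/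
abbrev seqTree : SimpleGraph (SeqV N) := parentGraph (fun v : SeqV N => v.1) (seqParent N)

lemma seqTree_isTree : (seqTree N).IsTree := by
  refine parentGraph_isTree (r := (⟨0, fun i => i.elim0⟩ : SeqV N)) (fun v => rfl) ?_
  rintro ⟨n, x⟩
  constructor
  · rintro h
    change n = 0 at h
    subst h
    congr 1
    funext i
    exact i.elim0
  · intro h
    rw [h]

lemma seqParent_smul (g : G) (v : SeqV N) : seqParent N (g • v) = g • seqParent N v := rfl

lemma seqTree_act (g : G) (v w : SeqV N) : (seqTree N).Adj v w ↔
    (seqTree N).Adj (MulAction.toPermHom G (SeqV N) g v) (MulAction.toPermHom G (SeqV N) g w) := by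
  change _ ∨ _ ↔ (v.1 = w.1 + 1 ∧ seqParent N (g • v) = g • w) ∨
    (w.1 = v.1 + 1 ∧ seqParent N (g • w) = g • v)
  rw [seqParent_smul, seqParent_smul, smul_left_cancel_iff, smul_left_cancel_iff]

/-- The geodesic from the root determined by an infinite sequence. -/
def seqGeo (x : (i : ℕ) → G ⧸ N i) : Geo (seqTree N) :=
  ⟨fun n => ⟨n, fun i => x i⟩, fun _ _ h => congrArg Sigma.fst h, fun _ => Or.inr ⟨rfl, rfl⟩⟩

lemma permBdrySmul_mk (g : G) (x : (i : ℕ) → G ⧸ N i) :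
    permBdrySmul (seqTree N) (MulAction.toPermHom G (SeqV N)) (seqTree_act N) g
      (Quotient.mk (tailSetoid _) (seqGeo N x)) =
      Quotient.mk (tailSetoid _) (seqGeo N (fun i => g • x i)) := rfl

lemma seq_free (hN : ∀ g : G, g ≠ 1 → ∃ i, (N i).Normal ∧ g ∉ N i) (g : G) (hg : g ≠ 1)
    (x : Bdry (seqTree N)) :
    permBdrySmul (seqTree N) (MulAction.toPermHom G (SeqV N)) (seqTree_act N) g x ≠ x := by
  obtain ⟨v, rfl⟩ := Quotient.exists_rep x
  intro h
  have h1 : tailRel (seqTree N)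
      (permGeoSmul (seqTree N) (MulAction.toPermHom G (SeqV N)) (seqTree_act N) g v) v :=
    Quotient.exact h
  obtain ⟨i, hn, hi⟩ := hN g hg
  obtain ⟨⟨n, y⟩, hle, hfix⟩ := fixes_deep v (fun w => g • w) (fun _ => rfl)
    (tailRel_exists _ h1) (i + 1)
  change i + 1 ≤ n at hle
  change (⟨n, g • y⟩ : SeqV N) = ⟨n, y⟩ at hfix
  have h2 : g • y = y := eq_of_heq (Sigma.mk.inj hfix).2
  have h3 : g • y ⟨i, hle⟩ = y ⟨i, hle⟩ := congrFun h2 ⟨i, hle⟩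
  obtain ⟨b, hb⟩ := QuotientGroup.mk_surjective (y ⟨i, hle⟩)
  rw [← hb] at h3
  change ((g * b : G) : G ⧸ N i) = (b : G ⧸ N i) at h3
  have h4 := QuotientGroup.eq.1 h3.symm
  apply hi
  have := hn.conj_mem _ h4 b
  simpa [mul_assoc] using this

lemma measurable_to_geo {α V : Type*} [m : MeasurableSpace α] (T : SimpleGraph V)
    (f : α → Geo T) (h : ∀ n, @Measurable α V m ⊤ fun x => (f x).1 n) :
    @Measurable _ _ m (geoMSexp T) f := by
  let _ : MeasurableSpace V := ⊤
  exact measurable_comap_iff.2 (measurable_pi_iff.2 h)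

lemma measurable_geo_apply {V : Type*} (T : SimpleGraph V) (n : ℕ) :
    @Measurable _ V (geoMSexp T) ⊤ fun v : Geo T => v.1 n := by
  let _ : MeasurableSpace V := ⊤
  exact (measurable_pi_apply n).comp (comap_measurable (fun v : Geo T => (v : ℕ → V)))

lemma permBdrySmul_measurable {V : Type*} (T : SimpleGraph V) (φ : G →* Equiv.Perm V)
    (h : ∀ (g : G) (v w : V), T.Adj v w ↔ T.Adj (φ g v) (φ g w)) (g : G) :
    @Measurable _ _ (bdryMSexp T) (bdryMSexp T) (permBdrySmul T φ h g) := by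
  let : MeasurableSpace V := ⊤
  let : MeasurableSpace (Geo T) := geoMSexp T
  have h1 : Measurable (permGeoSmul T φ h g) := by
    refine measurable_to_geo T _ fun n => ?_
    have h2 : Measurable (φ g : V → V) := measurable_from_top
    exact h2.comp (measurable_geo_apply T n)
  intro s hs
  exact h1 hs

lemma seq_measure [∀ i, (N i).Normal] [∀ i, (N i).FiniteIndex] :
    ∃ μ : @Measure (Bdry (seqTree N)) (bdryMSexp (seqTree N)), μ Set.univ = 1 ∧
      ∀ (g : G) (s : Set (Bdry (seqTree N))), MeasurableSet[bdryMSexp (seqTree N)] s →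
        μ (permBdrySmul (seqTree N) (MulAction.toPermHom G (SeqV N)) (seqTree_act N) g ⁻¹' s)
          = μ s := by
  let : TopologicalSpace G := ⊥
  have : DiscreteTopology G := ⟨rfl⟩
  let : ∀ i, MeasurableSpace (G ⧸ N i) := fun _ => ⊤
  have : ∀ i, DiscreteTopology (G ⧸ N i) := fun i => inferInstance
  have : ∀ i, BorelSpace (G ⧸ N i) := fun i => ⟨by
    rw [borel_eq_top_of_discrete]⟩
  let : MeasurableSpace (Bdry (seqTree N)) := bdryMSexp (seqTree N)
  let : MeasurableSpace (Geo (seqTree N)) := geoMSexp (seqTree N)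
  let K := (i : ℕ) → G ⧸ N i
  let Φ : K → Bdry (seqTree N) := fun x => Quotient.mk (tailSetoid _) (seqGeo N x)
  have hgeo : Measurable (seqGeo N) := by
    let : MeasurableSpace (SeqV N) := ⊤
    refine measurable_to_geo _ _ fun n => ?_
    have h1 : Measurable fun x : K => (fun i : Fin n => x i) :=
      measurable_pi_iff.2 fun i => measurable_pi_apply _
    have h2 : Measurable fun y : ((i : Fin n) → G ⧸ N i) => (⟨n, y⟩ : SeqV N) :=
      measurable_of_countable _
    exact h2.comp h1
  have hΦ : Measurable Φ := fun s hs => hgeo hs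
  let ν : Measure K := Measure.haarMeasure ⊤
  refine ⟨ν.map Φ, ?_, ?_⟩
  · rw [Measure.map_apply hΦ MeasurableSet.univ]
    exact Measure.haarMeasure_self
  · intro g s hs
    have hp := permBdrySmul_measurable (seqTree N) (MulAction.toPermHom G (SeqV N))
      (seqTree_act N) g hs
    rw [Measure.map_apply hΦ hs, Measure.map_apply hΦ hp]
    exact measure_preimage_mul ν (fun i => (g : G ⧸ N i)) (Φ ⁻¹' s)

end AuxMain

theorem residually_finite_nonamenable_has_nonhyperfinite_modular_action
    {G : Type} [Group G] [Countable G]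
    -- `G` is residually finite
    (hrf : ∀ g : G, g ≠ 1 → ∃ N : Subgroup G, N.Normal ∧ N.FiniteIndex ∧ g ∉ N)
    -- `G` is not amenable
    (hna : ¬ ReiterAmenable G) :
    ∃ (V : Type) (_ : Countable V) (T : SimpleGraph V) (_ : T.IsTree)
      (φ : G →* Equiv.Perm V)
      (hact : ∀ (g : G) (v w : V), T.Adj v w ↔ T.Adj (φ g v) (φ g w))
      (r : V),
      -- the action is rooted: it fixes the vertex `r`
      (∀ g : G, φ g r = r) ∧
      ∃ μ : @Measure (Bdry T) (bdryMSexp T),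
        -- `μ` is a Borel probability measure on `∂T`
        μ Set.univ = 1 ∧
        -- the boundary action preserves `μ`
        (∀ (g : G) (s : Set (Bdry T)), MeasurableSet[bdryMSexp T] s →
          μ (permBdrySmul T φ hact g ⁻¹' s) = μ s) ∧
        -- the boundary action is free
        (∀ g : G, g ≠ 1 → ∀ x : Bdry T, permBdrySmul T φ hact g x ≠ x) ∧
        -- the boundary orbit equivalence relation is not μ-hyperfinite
        ¬ @MuHyperfinite (Bdry T) (bdryMSexp T)
            (fun x y => ∃ g : G, permBdrySmul T φ hact g x = y) μ := by
  obtain ⟨e, he⟩ := exists_surjective_nat G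
  have hex : ∀ i, ∃ M : Subgroup G, M.Normal ∧ M.FiniteIndex ∧ (e i ≠ 1 → e i ∉ M) := by
    intro i
    by_cases h : e i = 1
    · exact ⟨⊤, inferInstance, inferInstance, fun h' => absurd h h'⟩
    · obtain ⟨M, h1, h2, h3⟩ := hrf _ h
      exact ⟨M, h1, h2, fun _ => h3⟩
  choose N hN1 hN2 hN3 using hex
  have hN : ∀ g : G, g ≠ 1 → ∃ i, (N i).Normal ∧ g ∉ N i := by
    intro g hg
    obtain ⟨i, rfl⟩ := he g
    exact ⟨i, hN1 i, hN3 i hg⟩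
  obtain ⟨μ, hμ1, hμ⟩ := seq_measure N
  have hc : ∀ i, Countable (G ⧸ N i) := fun i => inferInstance
  refine ⟨SeqV N, inferInstance, seqTree N, seqTree_isTree N, MulAction.toPermHom G (SeqV N),
    seqTree_act N, ⟨0, fun i => i.elim0⟩, ?_, μ, hμ1, hμ, seq_free N hN, ?_⟩
  · intro g
    change (⟨0, _⟩ : SeqV N) = _
    congr 1
    funext i
    exact i.elim0
  · let : MeasurableSpace (Bdry (seqTree N)) := bdryMSexp (seqTree N)
    have : IsProbabilityMeasure μ := ⟨hμ1⟩
    have hm := permBdrySmul_measurable (seqTree N) (MulAction.toPermHom G (SeqV N))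
      (seqTree_act N)
    refine not_muHyperfinite μ hna _ (fun g => ⟨hm g, ?_⟩) ?_ ?_ (seq_free N hN)
    · refine Measure.ext fun s hs => ?_
      rw [Measure.map_apply (hm g) hs, hμ g s hs]
    · intro x
      obtain ⟨v, rfl⟩ := Quotient.exists_rep x
      refine congrArg (Quotient.mk _) (Subtype.ext (funext fun n => ?_))
      exact one_smul G (v.1 n)
    · intro g h x
      obtain ⟨v, rfl⟩ := Quotient.exists_rep x
      refine congrArg (Quotient.mk _) (Subtype.ext (funext fun n => ?_))
      exact mul_smul g h (v.1 n)
end
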